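/- Let (A, 𝔪) be a two-dimensional excellent normal local domain over an algebraically closed field and let I, J ⊆ A be 𝔪-primary ideals. If both Rees algebras 𝓡(I) = A[It] and 𝓡(J) = A[Jt] are Cohen–Macaulay normal domains, then the Rees algebra 𝓡(IJ) = A[(IJ)t] of the product ideal IJ is a Cohen–Macaulay normal domain. -/

import Mathlib

/-! Auxiliary definitions.

Mathlib does not yet know about excellent rings; the excellence hypothesis of the paper
is used only to guarantee the existence of resolutions and of the normal Hilbert
polynomial, which we hypothesize directly where needed. -/

/-- The length `ℓ_R(M)` of a module, defined as the Krull dimension of its lattice of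
submodules (for modules of finite length this is the usual Jordan–Hölder length). -/
noncomputable def moduleLength (R M : Type*) [CommRing R] [AddCommGroup M] [Module R M] :
    WithBot ℕ∞ :=
  Order.krullDim (Submodule R M)

/-- `x` is integral over the ideal `I`: it satisfies an equation of integral dependence
`x ^ n + c 1 * x ^ (n-1) + ⋯ + c n = 0` with `c i ∈ I ^ i`. -/
def IsIntegralOverIdeal {A : Type*} [CommRing A] (I : Ideal A) (x : A) : Prop :=
  ∃ n : ℕ, 0 < n ∧ ∃ c : ℕ → A, (∀ i, 1 ≤ i → i ≤ n → c i ∈ I ^ i) ∧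
    x ^ n + ∑ i ∈ Finset.Icc 1 n, c i * x ^ (n - i) = 0

/-- The integral closure `J̄` of an ideal `J`: the set of elements integral over `J`
(this set is an ideal; we take the ideal it generates). -/
noncomputable def idealIntegralClosure {A : Type*} [CommRing A] (I : Ideal A) : Ideal A :=
  Ideal.span {x | IsIntegralOverIdeal I x}

/-- An ideal is integrally closed if it contains every element integral over it. -/
def IdealIsIntegrallyClosed {A : Type*} [CommRing A] (I : Ideal A) : Prop :=
  ∀ x, IsIntegralOverIdeal I x → x ∈ I

/-- A Noetherian local ring is Cohen–Macaulay if some regular sequence contained in the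
maximal ideal has length equal to the Krull dimension of the ring. -/
def IsCohenMacaulayLocalRing (R : Type*) [CommRing R] : Prop :=
  IsNoetherianRing R ∧ ∃ h : IsLocalRing R,
    letI := h
    ∃ rs : List R, (∀ x ∈ rs, x ∈ IsLocalRing.maximalIdeal R) ∧
      RingTheory.Sequence.IsRegular R rs ∧ (rs.length : WithBot ℕ∞) = ringKrullDim R

/-- A Noetherian ring is Cohen–Macaulay if all its localizations at primes are
Cohen–Macaulay local rings. -/
def IsCohenMacaulayRing (R : Type*) [CommRing R] : Prop :=
  IsNoetherianRing R ∧ ∀ (P : Ideal R) (hP : P.IsPrime),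
    letI := hP
    IsCohenMacaulayLocalRing (Localization.AtPrime P)

/-- A Cohen–Macaulay normal domain. -/
def IsCMNormalDomain (R : Type*) [CommRing R] : Prop :=
  IsCohenMacaulayRing R ∧ IsDomain R ∧ IsIntegrallyClosed R


section Part1

def RegMod {R : Type*} [CommRing R] (i : Ideal R) (x : R) : Prop := ∀ r, x * r ∈ i → r ∈ i

def IsColonPrime {R : Type*} [CommRing R] (i P : Ideal R) : Prop :=
  P.IsPrime ∧ ∃ e, ∀ s, s ∈ P ↔ s * e ∈ i

theorem colon_exists {R : Type*} [CommRing R] [IsNoetherianRing R] (i : Ideal R) (e : R)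
    (he : e ∉ i) : ∃ P, IsColonPrime i P ∧ ∀ s, s * e ∈ i → s ∈ P := by
  have hne : (Ideal.Quotient.mk i e) ≠ 0 := by
    rwa [Ne, Ideal.Quotient.eq_zero_iff_mem]
  obtain ⟨P, hP, hle⟩ := exists_le_isAssociatedPrime_of_isNoetherianRing R (M := R ⧸ i) _ hne
  rw [isAssociatedPrime_iff] at hP
  obtain ⟨hP1, x, hx⟩ := hP
  obtain ⟨y, rfl⟩ := Ideal.Quotient.mk_surjective x
  have key : ∀ (y s : R), s ∈ (⊥ : Submodule R (R ⧸ i)).colon {Ideal.Quotient.mk i y} ↔ s * y ∈ i := by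
    intro y s
    rw [Submodule.mem_colon_singleton, Submodule.mem_bot, ← Ideal.Quotient.eq_zero_iff_mem, map_mul]
    rfl
  refine ⟨P, ⟨hP1, y, fun s => ?_⟩, fun s hs => hle ((key _ _).2 hs)⟩
  rw [hx, key]

theorem colon_finite {R : Type*} [CommRing R] [IsNoetherianRing R] (i : Ideal R) :
    {P | IsColonPrime i P}.Finite := by
  refine (associatedPrimes.finite R (R ⧸ i)).subset ?_
  rintro P ⟨hP, y, hy⟩
  refine (isAssociatedPrime_iff).2 ⟨hP, Ideal.Quotient.mk i y, ?_⟩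
  ext s
  rw [hy, Submodule.mem_colon_singleton, Submodule.mem_bot, ← Ideal.Quotient.eq_zero_iff_mem, map_mul]
  rfl

/-- stable ideal criterion -/
theorem dvd_of_stable {R : Type*} [CommRing R] [IsDomain R] [IsNoetherianRing R]
    [IsIntegrallyClosed R] (N : Ideal R) (hN : N ≠ ⊥) (e x : R) (hx : x ≠ 0)
    (h : ∀ n ∈ N, ∃ n' ∈ N, e * n = x * n') : x ∣ e := by
  have hx' : algebraMap R  (FractionRing R) x ≠ 0 := by simpa using hx
  have hInt : IsIntegral R (algebraMap R  (FractionRing R) e / algebraMap R  (FractionRing R) x) := by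
    refine isIntegral_of_smul_mem_submodule (A := (FractionRing R)) (M := (FractionRing R)) (N := Submodule.map (Algebra.linearMap R (FractionRing R)) N) ?_ ?_ _ ?_
    · intro hb
      apply hN
      rw [eq_bot_iff]
      intro n hn
      have : algebraMap R  (FractionRing R) n ∈ Submodule.map (Algebra.linearMap R (FractionRing R)) N := ⟨n, hn, rfl⟩
      rw [hb] at this
      simpa using this
    · exact (IsNoetherian.noetherian N).map _
    · rintro _ ⟨n, hn, rfl⟩
      obtain ⟨n', hn', hh⟩ := h n hn
      refine ⟨n', hn', ?_⟩
      have := congrArg (algebraMap R (FractionRing R)) hh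
      rw [map_mul, map_mul] at this
      simp only [Algebra.linearMap_apply, smul_eq_mul]
      field_simp
      rw [this]; ring
  obtain ⟨y, hy⟩ := IsIntegrallyClosed.isIntegral_iff.1 hInt
  refine ⟨y, ?_⟩
  apply IsFractionRing.injective R (FractionRing R)
  rw [map_mul, hy, mul_div_cancel₀ _ hx']

theorem colonPrime_min {R : Type*} [CommRing R] [IsDomain R] [IsNoetherianRing R]
    [IsIntegrallyClosed R] {x : R} (hx : x ≠ 0) {P Q : Ideal R}
    (hP : IsColonPrime (Ideal.span {x}) P) (hQ : Q.IsPrime) (hQP : Q ≤ P) (hQ0 : Q ≠ ⊥) :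
    Q = P := by
  obtain ⟨hPp, e, he⟩ := hP
  have hne : ¬ x ∣ e := by
    intro h
    apply hPp.ne_top
    rw [Ideal.eq_top_iff_one, he, one_mul]
    exact Ideal.mem_span_singleton.2 h
  have hdiv : ∀ s ∈ P, ∃ t, e * s = x * t := by
    intro s hs
    obtain ⟨t, ht⟩ := Ideal.mem_span_singleton.1 ((he s).1 hs)
    exact ⟨t, by rw [mul_comm, ht]⟩
  have hP0 : P ≠ ⊥ := fun h => hQ0 (le_bot_iff.1 (h ▸ hQP))
  have : ∃ p ∈ P, ∃ s ∉ P, e * p = x * s := by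
    by_contra hcon
    push Not at hcon
    apply hne
    refine dvd_of_stable P hP0 e x hx ?_
    intro n hn
    obtain ⟨t, ht⟩ := hdiv n hn
    exact ⟨t, by_contra fun h => hcon n hn t h ht, ht⟩
  obtain ⟨p, hp, s, hs, hps⟩ := this
  have hkey : ∀ y t, e * y = x * t → s * y = p * t := by
    intro y t h
    apply mul_left_cancel₀ hx
    linear_combination p * h - y * hps
  apply le_antisymm hQP
  by_cases hpQ : p ∈ Q
  · intro y hy
    obtain ⟨t, ht⟩ := hdiv y hy
    have h1 : s * y ∈ Q := by rw [hkey y t ht]; exact Q.mul_mem_right _ hpQ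
    exact (hQ.mem_or_mem h1).resolve_left (fun h => hs (hQP h))
  · exfalso
    apply hne
    refine dvd_of_stable Q hQ0 e x hx ?_
    intro n hn
    obtain ⟨t, ht⟩ := hdiv n (hQP hn)
    refine ⟨t, ?_, ht⟩
    have h1 : p * t ∈ Q := by rw [← hkey n t ht]; exact Q.mul_mem_left _ hn
    exact (hQ.mem_or_mem h1).resolve_left hpQ

/-- exchange of socle elements -/
theorem soc_exchange {R : Type*} [CommRing R] (M i : Ideal R) {x x' : R} (hx'M : x' ∈ M)
    (hx : RegMod i x) (hx' : RegMod i x') 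
    (h : ∃ e, e ∉ i ⊔ Ideal.span {x} ∧ ∀ m ∈ M, m * e ∈ i ⊔ Ideal.span {x}) :
    ∃ e, e ∉ i ⊔ Ideal.span {x'} ∧ ∀ m ∈ M, m * e ∈ i ⊔ Ideal.span {x'} := by
  have hm : ∀ (x y : R), y ∈ i ⊔ Ideal.span {x} ↔ ∃ t, y - x * t ∈ i := by
    intro x y
    rw [Submodule.mem_sup]
    constructor
    · rintro ⟨j, hj, z, hz, rfl⟩
      obtain ⟨t, rfl⟩ := Ideal.mem_span_singleton.1 hz
      exact ⟨t, by simpa using hj⟩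
    · rintro ⟨t, ht⟩
      exact ⟨_, ht, x * t, Ideal.mem_span_singleton.2 ⟨t, rfl⟩, by ring⟩
  simp only [hm] at h ⊢
  obtain ⟨e, he, hM⟩ := h
  obtain ⟨e', he'⟩ := hM x' hx'M
  refine ⟨e', ?_, ?_⟩
  · rintro ⟨t, ht⟩
    apply he
    refine ⟨t, hx' _ ?_⟩
    have : x' * (e - x * t) = (x' * e - x * e') + x * (e' - x' * t) := by ring
    rw [this]
    exact i.add_mem he' (i.mul_mem_left _ ht)
  · intro m hmM
    obtain ⟨n, hn⟩ := hM m hmM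
    refine ⟨n, hx _ ?_⟩
    have : x * (m * e' - x' * n) = x' * (m * e - x * n) - m * (x' * e - x * e') := by ring
    rw [this]
    exact i.sub_mem (i.mul_mem_left _ hn) (i.mul_mem_left _ he')

/-- In a noetherian local domain with a regular sequence `u,v,w`, no socle mod `(x,y)`. -/
theorem depth_three {R : Type*} [CommRing R] [IsDomain R] [IsNoetherianRing R] [IsLocalRing R]
    {u v w x y : R} (hu : u ∈ IsLocalRing.maximalIdeal R) (hv : v ∈ IsLocalRing.maximalIdeal R)
    (hw : w ∈ IsLocalRing.maximalIdeal R) (hx : x ∈ IsLocalRing.maximalIdeal R)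
    (hy : y ∈ IsLocalRing.maximalIdeal R) (hu0 : u ≠ 0) (hx0 : x ≠ 0)
    (hv' : RegMod (Ideal.span {u}) v) (hw' : RegMod (Ideal.span {u} ⊔ Ideal.span {v}) w)
    (hy' : RegMod (Ideal.span {x}) y) :
    ¬ IsColonPrime (Ideal.span {x} ⊔ Ideal.span {y}) (IsLocalRing.maximalIdeal R) := by
  classical
  rintro ⟨hP, e, he⟩
  set M := IsLocalRing.maximalIdeal R with hM
  -- the avoiding element
  have notM : ∀ (x y : R), y ∈ M → RegMod (Ideal.span {x}) y → ∀ P, IsColonPrime (Ideal.span {x}) P →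
      ¬ M ≤ P := by
    rintro x y hy hr P ⟨hP, e, he⟩ hle
    have : e ∈ Ideal.span {x} := hr e ((he y).1 (hle hy))
    apply hP.ne_top
    rw [Ideal.eq_top_iff_one, he, one_mul]; exact this
  have hfin := (colon_finite (Ideal.span {x})).union (colon_finite (Ideal.span {u}))
  obtain ⟨w', hw'M, hav⟩ : ∃ w' ∈ M, ∀ P ∈ {P | IsColonPrime (Ideal.span {x}) P} ∪ {P | IsColonPrime (Ideal.span {u}) P}, w' ∉ P := by
    by_contra hcon
    push Not at hcon
    have hsub : (M : Set R) ⊆ ⋃ P ∈ (hfin.toFinset : Set (Ideal R)), ((id P : Ideal R) : Set R) := by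
      intro r hr
      obtain ⟨P, hP, hrP⟩ := hcon r hr
      simp only [Set.mem_iUnion]
      exact ⟨P, by simpa using hP, hrP⟩
    rw [Ideal.subset_union_prime ⊥ ⊥] at hsub
    · obtain ⟨P, hP, hle⟩ := hsub
      simp only [Set.Finite.mem_toFinset] at hP
      rcases hP with hP | hP
      · exact notM x y hy hy' P hP hle
      · exact notM u v hv hv' P hP hle
    · intro P hP _ _
      simp only [Set.Finite.mem_toFinset] at hP
      rcases hP with hP | hP <;> exact hP.1
  have hregx : RegMod (Ideal.span {x}) w' := by
    intro r hr
    by_contra hc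
    obtain ⟨P, hP, h⟩ := colon_exists _ r hc
    exact hav P (Or.inl hP) (h _ hr)
  have hregu : RegMod (Ideal.span {u}) w' := by
    intro r hr
    by_contra hc
    obtain ⟨P, hP, h⟩ := colon_exists _ r hc
    exact hav P (Or.inr hP) (h _ hr)
  have swap : ∀ x : R, x ≠ 0 → RegMod (Ideal.span {x}) w' → RegMod (Ideal.span {w'}) x := by
    intro x hx0 hreg r hr
    obtain ⟨s, hs⟩ := Ideal.mem_span_singleton.1 hr
    obtain ⟨s', rfl⟩ := Ideal.mem_span_singleton.1 (hreg s (Ideal.mem_span_singleton.2 ⟨r, hs.symm⟩))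
    refine Ideal.mem_span_singleton.2 ⟨s', mul_left_cancel₀ hx0 ?_⟩
    rw [hs]; ring
  have s0 : ∃ e, e ∉ Ideal.span {x} ⊔ Ideal.span {y} ∧ ∀ m ∈ M, m * e ∈ Ideal.span {x} ⊔ Ideal.span {y} := by
    refine ⟨e, fun h => hP.ne_top ?_, fun m hm => (he m).1 hm⟩
    rw [Ideal.eq_top_iff_one, he, one_mul]; exact h
  have s1 := soc_exchange M _ hw'M hy' hregx s0
  rw [sup_comm] at s1
  have s2 := soc_exchange M _ hu (swap x hx0 hregx) (swap u hu0 hregu) s1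
  rw [sup_comm] at s2
  obtain ⟨e, he1, he2⟩ := soc_exchange M _ hv hregu hv' s2
  exact he1 (hw' _ (he2 w hw))

end Part1

section Part2

open RingTheory.Sequence

theorem regMod_iff {R : Type*} [CommRing R] (rs : List R) (x : R) :
    IsWeaklyRegular R (rs ++ [x]) ↔ IsWeaklyRegular R rs ∧ RegMod (Ideal.ofList rs) x := by
  rw [isWeaklyRegular_append_iff, isWeaklyRegular_singleton_iff,
    isSMulRegular_quotient_iff_mem_of_smul_mem]
  simp [RegMod]

theorem regMod_bot {R : Type*} [CommRing R] [IsDomain R] {x : R} (hx : x ≠ 0) :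
    RegMod (⊥ : Ideal R) x := by
  intro r hr
  simpa [hx] using hr

theorem wr1 {R : Type*} [CommRing R] [IsDomain R] {x : R} (hx : x ≠ 0) :
    IsWeaklyRegular R [x] := by
  have := (regMod_iff [] x).2 ⟨by simp, by simpa using regMod_bot hx⟩
  simpa using this

theorem wr2 {R : Type*} [CommRing R] [IsDomain R] {x y : R} (hx : x ≠ 0)
    (hy : RegMod (Ideal.span {x}) y) : IsWeaklyRegular R [x, y] := by
  have := (regMod_iff [x] y).2 ⟨wr1 hx, by simpa [Ideal.ofList_singleton] using hy⟩
  simpa using this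

theorem wr3 {R : Type*} [CommRing R] [IsDomain R] {x y z : R} (hx : x ≠ 0)
    (hy : RegMod (Ideal.span {x}) y) (hz : RegMod (Ideal.span {x} ⊔ Ideal.span {y}) z) :
    IsWeaklyRegular R [x, y, z] := by
  have := (regMod_iff [x, y] z).2 ⟨wr2 hx hy, by simpa [Ideal.ofList_cons, Ideal.ofList_singleton] using hz⟩
  simpa using this

/-- criterion -/
theorem cmLocal_of {W : Type*} [CommRing W] [IsNoetherianRing W] [hl : IsLocalRing W] (rs : List W)
    (hm : ∀ r ∈ rs, r ∈ IsLocalRing.maximalIdeal W) (hr : IsWeaklyRegular W rs)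
    (hrad : ∀ Q : Ideal W, Q.IsPrime → Ideal.ofList rs ≤ Q → Q = IsLocalRing.maximalIdeal W) :
    IsCohenMacaulayLocalRing W := by
  refine ⟨inferInstance, hl, rs, hm, ?_⟩
  have hreg : IsRegular W rs := IsRegular.of_isWeaklyRegular_of_mem_maximalIdeal W hm hr
  refine ⟨hreg, ?_⟩
  have h := ringKrullDim_add_length_eq_ringKrullDim_of_isRegular rs hreg
  have hne : Ideal.ofList rs ≠ ⊤ := by
    intro h1
    have : Ideal.ofList rs ≤ IsLocalRing.maximalIdeal W := Ideal.span_le.2 hm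
    exact (IsLocalRing.maximalIdeal.isMaximal W).ne_top (top_le_iff.1 (h1 ▸ this))
  have : Nontrivial (W ⧸ Ideal.ofList rs) := Ideal.Quotient.nontrivial_iff.2 hne
  have h0 : ringKrullDim (W ⧸ Ideal.ofList rs) = 0 := by
    rw [← ringKrullDimZero_iff_ringKrullDim_eq_zero, Ring.krullDimLE_zero_iff]
    intro I hI
    have hc := hrad (I.comap (Ideal.Quotient.mk _)) (hI.comap _) (by
      intro x hx
      rw [Ideal.mem_comap, Ideal.Quotient.eq_zero_iff_mem.2 hx]; exact I.zero_mem)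
    have : (I.comap (Ideal.Quotient.mk (Ideal.ofList rs))).IsMaximal := hc ▸ inferInstance
    have h5 := (Ideal.map_eq_top_or_isMaximal_of_surjective (Ideal.Quotient.mk (Ideal.ofList rs)) Ideal.Quotient.mk_surjective this)
    rw [Ideal.map_comap_of_surjective _ Ideal.Quotient.mk_surjective] at h5
    exact h5.resolve_left hI.ne_top
  rw [← h, h0, zero_add]

theorem cmLocal_atPrime {R : Type*} [CommRing R] [IsNoetherianRing R] (P : Ideal R) [hP : P.IsPrime]
    (rs : List R) (hm : ∀ r ∈ rs, r ∈ P) (hr : IsWeaklyRegular R rs)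
    (hrad : ∀ Q : Ideal R, Q.IsPrime → Q ≤ P → (∀ r ∈ rs, r ∈ Q) → P ≤ Q) :
    IsCohenMacaulayLocalRing (Localization.AtPrime P) := by
  have : IsNoetherianRing (Localization.AtPrime P) :=
    IsLocalization.isNoetherianRing P.primeCompl _ inferInstance
  refine cmLocal_of (rs.map (algebraMap R (Localization.AtPrime P))) ?_
    (hr.of_isLocalization (Localization.AtPrime P) P.primeCompl) ?_
  · intro r hr
    obtain ⟨x, hx, rfl⟩ := List.mem_map.1 hr
    rw [IsLocalization.AtPrime.to_map_mem_maximal_iff (Localization.AtPrime P) P]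
    exact hm x hx
  · intro Q hQ hle
    apply le_antisymm (IsLocalRing.le_maximalIdeal hQ.ne_top)
    have h1 : Q.comap (algebraMap R (Localization.AtPrime P)) ≤ P := by
      intro x hx
      exact (IsLocalization.AtPrime.to_map_mem_maximal_iff (Localization.AtPrime P) P x).1
        (IsLocalRing.le_maximalIdeal hQ.ne_top (Ideal.mem_comap.1 hx))
    have h2 := hrad _ (hQ.comap _) h1 (fun r hr => Ideal.mem_comap.2 (hle (Ideal.subset_span (List.mem_map.2 ⟨r, hr, rfl⟩))))
    rw [← Localization.AtPrime.map_eq_maximalIdeal]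
    exact Ideal.map_le_iff_le_comap.2 h2

theorem cmLocal_ringEquiv {R S : Type*} [CommRing R] [CommRing S] (e : R ≃+* S)
    (h : IsCohenMacaulayLocalRing R) : IsCohenMacaulayLocalRing S := by
  obtain ⟨hn, hl, rs, hm, hr, hd⟩ := h
  have := hl
  have : IsLocalRing S := e.isLocalRing
  refine ⟨isNoetherianRing_of_ringEquiv R e, inferInstance, rs.map e, ?_, ?_, ?_⟩
  · intro x hx
    obtain ⟨y, hy, rfl⟩ := List.mem_map.1 hx
    have := hm y hy
    rw [IsLocalRing.mem_maximalIdeal] at this ⊢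
    intro hu
    exact this ((MulEquiv.isUnit_map e).1 hu)
  · refine (AddEquiv.isRegular_congr (e := e.toAddEquiv) ?_).1 hr
    refine List.forall₂_map_right_iff.mpr <| List.forall₂_same.mpr fun r _ x => ?_
    simp
  · rw [List.length_map, hd]; exact ringKrullDim_eq_of_ringEquiv e

def NoChain (R : Type*) [CommRing R] : Prop := ∀ P0 P1 P2 P3 : Ideal R, P0.IsPrime → P1.IsPrime →
  P2.IsPrime → P3.IsPrime → P0 < P1 → P1 < P2 → P2 < P3 → False

theorem noChain_of_dim {R : Type*} [CommRing R] (h : ringKrullDim R ≤ 2) : NoChain R := by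
  intro P0 P1 P2 P3 h0 h1 h2 h3 h01 h12 h23
  let s : LTSeries (PrimeSpectrum R) :=
    { length := 3
      toFun := ![⟨P0, h0⟩, ⟨P1, h1⟩, ⟨P2, h2⟩, ⟨P3, h3⟩]
      step := by
        intro i
        fin_cases i
        · exact h01
        · exact h12
        · exact h23 }
  have := Order.LTSeries.length_le_krullDim s
  have h4 : ((3 : ℕ) : WithBot ℕ∞) ≤ ((2 : ℕ) : WithBot ℕ∞) := le_trans this h
  exact absurd h4 (by rw [Nat.cast_le]; norm_num)

theorem NoChain.localization {R : Type*} [CommRing R] (h : NoChain R) (P : Ideal R) [P.IsPrime] :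
    NoChain (Localization.AtPrime P) := by
  intro P0 P1 P2 P3 h0 h1 h2 h3 h01 h12 h23
  have key : ∀ I J : Ideal (Localization.AtPrime P), I < J →
      I.comap (algebraMap R _) < J.comap (algebraMap R _) := by
    intro I J hIJ
    refine lt_of_le_of_ne (Ideal.comap_mono hIJ.le) fun he => hIJ.ne ?_
    rw [← IsLocalization.map_under P.primeCompl _ I, ← IsLocalization.map_under P.primeCompl _ J]
    exact congrArg _ he
  exact h _ _ _ _ (h0.comap (algebraMap R _)) (h1.comap _) (h2.comap _) (h3.comap _)
    (key _ _ h01) (key _ _ h12) (key _ _ h23)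

/-- avoidance -/
theorem avoid {R : Type*} [CommRing R] (M : Ideal R) (s : Set (Ideal R)) (hs : s.Finite)
    (hp : ∀ P ∈ s, P.IsPrime) (hM : ∀ P ∈ s, ¬ M ≤ P) : ∃ w ∈ M, ∀ P ∈ s, w ∉ P := by
  by_contra hcon
  push Not at hcon
  have hsub : (M : Set R) ⊆ ⋃ P ∈ (hs.toFinset : Set (Ideal R)), ((id P : Ideal R) : Set R) := by
    intro r hr
    obtain ⟨P, hP, hrP⟩ := hcon r hr
    simp only [Set.mem_iUnion]
    exact ⟨P, by simpa using hP, hrP⟩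
  rw [Ideal.subset_union_prime ⊥ ⊥] at hsub
  · obtain ⟨P, hP, hle⟩ := hsub
    simp only [Set.Finite.mem_toFinset] at hP
    exact hM P hP hle
  · intro P hP _ _
    simp only [Set.Finite.mem_toFinset] at hP
    exact hp P hP

theorem normal_dim2 {L : Type*} [CommRing L] [IsDomain L] [IsNoetherianRing L] [IsIntegrallyClosed L]
    [IsLocalRing L] (h : NoChain L) : ∃ rs : List L, (∀ r ∈ rs, r ∈ IsLocalRing.maximalIdeal L) ∧
      IsWeaklyRegular L rs ∧ ∀ Q : Ideal L, Q.IsPrime → (∀ r ∈ rs, r ∈ Q) → Q = IsLocalRing.maximalIdeal L := by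
  set n := IsLocalRing.maximalIdeal L with hn
  have hle : ∀ Q : Ideal L, Q.IsPrime → Q ≤ n := fun Q hQ => IsLocalRing.le_maximalIdeal hQ.ne_top
  by_cases hn0 : n = ⊥
  · exact ⟨[], by simp, by simp, fun Q hQ _ => le_antisymm (hle Q hQ) (by simp [hn0])⟩
  obtain ⟨x, hx, hx0⟩ := Submodule.exists_mem_ne_zero_of_ne_bot hn0
  by_cases hmin : n ∈ (Ideal.span {x}).minimalPrimes
  · refine ⟨[x], by simpa using hx, wr1 hx0, fun Q hQ hxQ => le_antisymm (hle Q hQ) ?_⟩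
    refine hmin.2 ⟨hQ, ?_⟩ (hle Q hQ)
    rw [Ideal.span_singleton_le_iff_mem]; exact hxQ x (by simp)
  have hnp : n.IsPrime := (IsLocalRing.maximalIdeal.isMaximal L).isPrime
  have hmaxle : ∀ Q : Ideal L, Q.IsPrime → n ≤ Q → n = Q := fun Q hQ h => le_antisymm h (hle Q hQ)
  obtain ⟨y, hy, hav⟩ := avoid n ({P | IsColonPrime (Ideal.span {x}) P} ∪ (Ideal.span {x}).minimalPrimes)
    ((colon_finite _).union (Ideal.finite_minimalPrimes_of_isNoetherianRing L _)) (by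
      rintro P (hP | hP)
      · exact hP.1
      · exact hP.1.1) (by
      rintro P (hP | hP) hc
      · have := hmaxle P hP.1 hc
        subst this
        apply hmin
        obtain ⟨Q, hQ, hQn⟩ := Ideal.exists_minimalPrimes_le (I := Ideal.span {x}) (J := n)
          (by rwa [Ideal.span_singleton_le_iff_mem])
        have hxQ : x ∈ Q := hQ.1.2 (Ideal.mem_span_singleton_self x)
        have := colonPrime_min hx0 hP hQ.1.1 hQn (fun h => hx0 (by simpa [h] using hxQ))
        rwa [← this]
      · have := hmaxle P hP.1.1 hc
        subst this
        exact hmin hP)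
  refine ⟨[x, y], by simp [hx, hy], wr2 hx0 ?_, ?_⟩
  · intro r hr
    by_contra hc
    obtain ⟨P, hP, h⟩ := colon_exists _ r hc
    exact hav P (Or.inl hP) (h _ hr)
  · intro Q hQ hQm
    by_contra hne
    have hxQ : x ∈ Q := hQm x (by simp)
    obtain ⟨Q0, hQ0, hQQ⟩ := Ideal.exists_minimalPrimes_le (I := Ideal.span {x}) (J := Q)
          (by rwa [Ideal.span_singleton_le_iff_mem])
    have hxQ0 : x ∈ Q0 := hQ0.1.2 (Ideal.mem_span_singleton_self x)
    refine h ⊥ Q0 Q n Ideal.isPrime_bot hQ0.1.1 hQ hnp ?_ ?_ (lt_of_le_of_ne (hle Q hQ) hne)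
    · rw [bot_lt_iff_ne_bot]; rintro rfl; exact hx0 (by simpa using hxQ0)
    · refine lt_of_le_of_ne hQQ ?_
      rintro rfl
      exact hav Q0 (Or.inr hQ0) (hQm y (by simp))

end Part2

section Part3

open RingTheory.Sequence Polynomial

/-- localization comparison -/
theorem locIso {R S : Type*} [CommRing R] [CommRing S] (θ : R →+* S) (hθ : Function.Injective θ)
    (P : Ideal R) [hP : P.IsPrime] (h : ∀ s, ∃ m, m ∉ P ∧ ∃ r, θ m * s = θ r) :
    ∃ (P' : Ideal S) (_ : P'.IsPrime), (∀ r, θ r ∈ P' ↔ r ∈ P) ∧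
      Nonempty (Localization.AtPrime P' ≃+* Localization.AtPrime P) := by
  let P' : Ideal S :=
    { carrier := {s | ∃ m, m ∉ P ∧ ∃ r ∈ P, θ m * s = θ r}
      add_mem' := by
        rintro s t ⟨m, hm, r, hr, h1⟩ ⟨m', hm', r', hr', h2⟩
        refine ⟨m * m', fun h => (hP.mem_or_mem h).elim hm hm', m' * r + m * r',
          P.add_mem (P.mul_mem_left _ hr) (P.mul_mem_left _ hr'), ?_⟩
        simp only [map_mul, map_add]; linear_combination θ m' * h1 + θ m * h2
      zero_mem' := ⟨1, fun h => hP.ne_top ((Ideal.eq_top_iff_one _).2 h), 0, P.zero_mem, by simp⟩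
      smul_mem' := by
        rintro c s ⟨m, hm, r, hr, h1⟩
        obtain ⟨m', hm', r', h2⟩ := h c
        refine ⟨m' * m, fun h => (hP.mem_or_mem h).elim hm' hm, r' * r, P.mul_mem_left _ hr, ?_⟩
        simp only [map_mul, smul_eq_mul]; linear_combination θ m * s * h2 + θ r' * h1 }
  have hmem : ∀ s, s ∈ P' ↔ ∃ m, m ∉ P ∧ ∃ r ∈ P, θ m * s = θ r := fun s => Iff.rfl
  have hco : ∀ r, θ r ∈ P' ↔ r ∈ P := by
    intro r
    rw [hmem]
    constructor
    · rintro ⟨m, hm, r', hr', he⟩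
      rw [← map_mul] at he
      have := hθ he
      exact (hP.mem_or_mem (this ▸ hr')).resolve_left hm
    · intro hr
      exact ⟨1, fun h => hP.ne_top ((Ideal.eq_top_iff_one _).2 h), r, hr, by simp⟩
  have hP' : P'.IsPrime := by
    refine ⟨fun h1 => ?_, ?_⟩
    · have : (1 : R) ∈ P := (hco 1).1 (by rw [h1]; trivial)
      exact hP.ne_top ((Ideal.eq_top_iff_one _).2 this)
    · intro x y hxy
      obtain ⟨m, hm, r, h1⟩ := h x
      obtain ⟨m', hm', r', h2⟩ := h y
      have : r * r' ∈ P := by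
        rw [← hco, map_mul, ← h1, ← h2]
        have : θ m * x * (θ m' * y) = θ m * θ m' * (x * y) := by ring
        rw [this]; exact P'.mul_mem_left _ hxy
      rcases hP.mem_or_mem this with h3 | h3
      · exact Or.inl ⟨m, hm, r, h3, h1⟩
      · exact Or.inr ⟨m', hm', r', h3, h2⟩
  refine ⟨P', hP', hco, ?_⟩
  let _ : Algebra R (Localization.AtPrime P') := ((algebraMap S (Localization.AtPrime P')).comp θ).toAlgebra
  have halg : ∀ r, algebraMap R (Localization.AtPrime P') r = algebraMap S (Localization.AtPrime P') (θ r) :=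
    fun r => rfl
  have hloc : IsLocalization P.primeCompl (Localization.AtPrime P') := by
    refine (isLocalization_iff _ _).2 ⟨?_, ?_, ?_⟩
    · rintro ⟨y, hy⟩
      rw [halg]
      exact IsLocalization.map_units (Localization.AtPrime P') (⟨θ y, fun h => hy ((hco y).1 h)⟩ : P'.primeCompl)
    · intro z
      obtain ⟨⟨s, t, ht⟩, hst⟩ := IsLocalization.surj P'.primeCompl z
      obtain ⟨m, hm, r, h1⟩ := h s
      obtain ⟨m', hm', r', h2⟩ := h t
      have hr' : r' ∉ P := by
        intro hr'
        exact ht ⟨m', hm', r', hr', h2⟩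
      refine ⟨⟨m' * r, r' * m, fun h => (hP.mem_or_mem h).elim hr' hm⟩, ?_⟩
      simp only [halg, map_mul] at hst ⊢
      rw [← h1, ← h2]
      simp only [map_mul]
      linear_combination (algebraMap S (Localization.AtPrime P') (θ m) * algebraMap S (Localization.AtPrime P') (θ m')) * hst
    · intro x y hxy
      rw [halg, halg] at hxy
      obtain ⟨⟨c, hc⟩, hcc⟩ := IsLocalization.exists_of_eq (M := P'.primeCompl) hxy
      obtain ⟨m, hm, r, h1⟩ := h c
      have hr : r ∉ P := fun hr => hc ⟨m, hm, r, hr, h1⟩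
      refine ⟨⟨r, hr⟩, hθ ?_⟩
      simp only [map_mul, ← h1] at hcc ⊢
      linear_combination θ m * hcc
  exact ⟨(IsLocalization.algEquiv P.primeCompl (Localization.AtPrime P') (Localization.AtPrime P)).toRingEquiv⟩

theorem monic_regMod {L : Type*} [CommRing L] (q : Ideal L) (g : L[X]) (hg : g.Monic) :
    RegMod (q.map C) g := by
  intro r hr
  have key : ∀ p : L[X], p ∈ q.map C ↔ p.map (Ideal.Quotient.mk q) = 0 := by
    intro p
    rw [Ideal.mem_map_C_iff, Polynomial.ext_iff]
    simp [Ideal.Quotient.eq_zero_iff_mem]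
  rw [key] at hr ⊢
  rw [Polynomial.map_mul] at hr
  exact ((hg.map (Ideal.Quotient.mk q)).mul_right_eq_zero_iff).1 hr

theorem poly_cm {L : Type*} [CommRing L] [IsNoetherianRing L] [IsLocalRing L]
    (rs : List L) (hm : ∀ r ∈ rs, r ∈ IsLocalRing.maximalIdeal L) (hr : IsWeaklyRegular L rs)
    (hrad : ∀ Q : Ideal L, Q.IsPrime → (∀ r ∈ rs, r ∈ Q) → Q = IsLocalRing.maximalIdeal L)
    (P : Ideal L[X]) [hP : P.IsPrime] (hPn : ∀ x ∈ IsLocalRing.maximalIdeal L, C x ∈ P) :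
    IsCohenMacaulayLocalRing (Localization.AtPrime P) := by
  classical
  set n := IsLocalRing.maximalIdeal L with hn
  have hr' : IsWeaklyRegular L[X] (rs.map C) := hr.of_flat
  have hm' : ∀ r ∈ rs.map C, r ∈ P := by
    intro r hr
    obtain ⟨x, hx, rfl⟩ := List.mem_map.1 hr
    exact hPn x (hm x hx)
  have hQn : ∀ Q : Ideal L[X], Q.IsPrime → (∀ r ∈ rs.map C, r ∈ Q) → n.map C ≤ Q := by
    intro Q hQ h
    rw [Ideal.map_le_iff_le_comap]
    rw [hrad (Q.comap C) (hQ.comap C) (fun r hr => h _ (List.mem_map.2 ⟨r, hr, rfl⟩))]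
  by_cases hPe : P ≤ n.map C
  · refine cmLocal_atPrime P (rs.map C) hm' hr' ?_
    intro Q hQ _ h
    exact hPe.trans (hQn Q hQ h)
  · let φ : L[X] →+* (IsLocalRing.ResidueField L)[X] := Polynomial.mapRingHom (IsLocalRing.residue L)
    have hφ : Function.Surjective φ := Polynomial.map_surjective _ (IsLocalRing.residue_surjective)
    have hker : ∀ p, φ p = 0 → p ∈ n.map C := by
      intro p hp
      rw [Ideal.mem_map_C_iff]
      intro i
      have := congrArg (fun q => Polynomial.coeff q i) hp
      simp only [φ, coe_mapRingHom, coeff_map, coeff_zero] at this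
      exact (IsLocalRing.residue_eq_zero_iff _).1 this
    obtain ⟨g0, hg0⟩ := (IsPrincipalIdealRing.principal (P.map φ)).principal
    have hg00 : g0 ≠ 0 := by
      rintro rfl
      apply hPe
      intro p hp
      apply hker
      have : φ p ∈ P.map φ := Ideal.mem_map_of_mem _ hp
      rw [hg0] at this
      simpa using this
    have hmon : (normalize g0).Monic := Polynomial.monic_normalize hg00
    obtain ⟨g, hg1, -, hg2⟩ := Polynomial.lifts_and_natDegree_eq_and_monic (f := IsLocalRing.residue L)
      ((Polynomial.mem_lifts _).2 (hφ (normalize g0))) hmon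
    have hkerle : n.map C ≤ P := Ideal.map_le_iff_le_comap.2 (fun x hx => hPn x hx)
    have hgen : ∀ p, φ p ∈ P.map φ → p ∈ P := by
      intro p hp
      obtain ⟨p', hp', he⟩ := (Ideal.mem_map_iff_of_surjective φ hφ).1 hp
      have : p - p' ∈ P := hkerle (hker _ (by rw [map_sub, he, sub_self]))
      simpa using P.add_mem this hp'
    have hgP : g ∈ P := by
      apply hgen
      have : φ g = normalize g0 := hg1
      rw [this, hg0]
      exact Ideal.mem_span_singleton.2 (by simp)
    refine cmLocal_atPrime P (rs.map C ++ [g]) ?_ ?_ ?_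
    · intro r hr
      rcases List.mem_append.1 hr with h | h
      · exact hm' r h
      · rw [List.mem_singleton.1 h]; exact hgP
    · rw [regMod_iff]
      refine ⟨hr', ?_⟩
      rw [← Ideal.map_ofList]
      exact monic_regMod _ g hg2
    · intro Q hQ _ hrQ p hp
      have hnQ := hQn Q hQ (fun r hr => hrQ r (List.mem_append.2 (Or.inl hr)))
      have hgQ : g ∈ Q := hrQ g (List.mem_append.2 (Or.inr (by simp)))
      have h1 : φ p ∈ P.map φ := Ideal.mem_map_of_mem _ hp
      rw [hg0] at h1
      have h2 : normalize g0 ∣ φ p := by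
        rw [normalize_dvd_iff]; exact Ideal.mem_span_singleton.1 h1
      obtain ⟨y, hy⟩ := h2
      obtain ⟨y', rfl⟩ := hφ y
      have h3 : p - g * y' ∈ Q := by
        apply hnQ
        apply hker
        have : φ g = normalize g0 := hg1
        rw [map_sub, hy, map_mul, this, sub_self]
      simpa using Q.add_mem h3 (Q.mul_mem_right y' hgQ)

theorem chart_cm {R S : Type*} [CommRing R] [CommRing S] [IsDomain S] [IsNoetherianRing S]
    [IsIntegrallyClosed S] (hS : NoChain S) (θ : R →+* S[X]) (hθ : Function.Injective θ)
    (P : Ideal R) [hP : P.IsPrime] (h : ∀ s, ∃ m, m ∉ P ∧ ∃ r, θ m * s = θ r) :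
    IsCohenMacaulayLocalRing (Localization.AtPrime P) := by
  obtain ⟨P', hP', hco, ⟨e⟩⟩ := locIso θ hθ P h
  refine cmLocal_ringEquiv e ?_
  clear hco e h
  have hp : (P'.comap (C : S →+* S[X])).IsPrime := hP'.comap _
  let p : Ideal S := P'.comap (C : S →+* S[X])
  have hpp : p.IsPrime := hp
  have : IsNoetherianRing (Localization.AtPrime p) :=
    IsLocalization.isNoetherianRing p.primeCompl _ inferInstance
  have : IsIntegrallyClosed (Localization.AtPrime p) :=
    isIntegrallyClosed_of_isLocalization _ p.primeCompl p.primeCompl_le_nonZeroDivisors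
  have : IsDomain (Localization.AtPrime p) :=
    IsLocalization.isDomain_localization p.primeCompl_le_nonZeroDivisors
  obtain ⟨rs, h1, h2, h3⟩ := normal_dim2 (hS.localization p)
  have hinj : Function.Injective (algebraMap S (Localization.AtPrime p)) :=
    IsLocalization.injective _ p.primeCompl_le_nonZeroDivisors
  obtain ⟨P'', hP'', hco, ⟨e⟩⟩ := locIso (Polynomial.mapRingHom (algebraMap S (Localization.AtPrime p)))
    (Polynomial.map_injective _ hinj) P' (by
      intro s
      obtain ⟨b, hb, hbb⟩ := IsLocalization.integerNormalization_spec p.primeCompl s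
      refine ⟨C b, fun h => hb h, IsLocalization.integerNormalization p.primeCompl s, ?_⟩
      rw [coe_mapRingHom, hbb, map_C]
      ext i
      rw [coeff_C_mul, coeff_smul, Algebra.smul_def])
  refine cmLocal_ringEquiv e (poly_cm rs h1 h2 h3 P'' ?_)
  intro x hx
  obtain ⟨⟨a, s⟩, has⟩ := IsLocalization.surj p.primeCompl x
  simp only at has
  have ha : a ∈ p := by
    rw [← IsLocalization.AtPrime.to_map_mem_maximal_iff (Localization.AtPrime p) p, ← has]
    exact Ideal.mul_mem_right _ _ hx
  have hs : (C (algebraMap S (Localization.AtPrime p) s.1)) ∉ P'' := by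
    have := hco (C s.1)
    simp only [coe_mapRingHom, map_C] at this
    rw [this]; exact s.2
  have hm : C x * C (algebraMap S (Localization.AtPrime p) s.1) ∈ P'' := by
    rw [← C_mul, has]
    have := hco (C a)
    simp only [coe_mapRingHom, map_C] at this
    exact this.2 ha
  exact (hP''.mem_or_mem hm).resolve_right hs

end Part3

section Part4

open Polynomial

section chart
set_option linter.unusedSectionVars false
set_option linter.unusedSimpArgs false
variable {A : Type*} [CommRing A] [IsDomain A] (F : Type*) [Field F] [Algebra A F] [IsFractionRing A F]

/-- affine chart of the blowup -/
noncomputable def chart (I : Ideal A) (a : A) : Subring F :=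
  (((aeval (algebraMap A F a)⁻¹ : A[X] →ₐ[A] F) : A[X] →+* F).comp
    ((reesAlgebra I).val : reesAlgebra I →+* A[X])).range

variable {F}
theorem ia_ne {a : A} (ha : a ≠ 0) : algebraMap A F a ≠ 0 := by
  intro h; apply ha; exact (IsFractionRing.injective A F) (by rw [h, map_zero])

theorem mem_chart {I : Ideal A} {a : A} (haI : a ∈ I) (ha : a ≠ 0) (x : F) :
    x ∈ chart F I a ↔ ∃ N, ∃ y ∈ I ^ N, x * algebraMap A F a ^ N = algebraMap A F y := by
  have h0 : algebraMap A F a ≠ 0 := ia_ne ha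
  constructor
  · rintro ⟨⟨p, hp⟩, rfl⟩
    rw [mem_reesAlgebra_iff] at hp
    refine ⟨p.natDegree, ∑ i ∈ Finset.range (p.natDegree + 1), p.coeff i * a ^ (p.natDegree - i), ?_, ?_⟩
    · refine Ideal.sum_mem _ fun i hi => ?_
      have : i + (p.natDegree - i) = p.natDegree := by
        have := Finset.mem_range.1 hi; omega
      rw [← this, pow_add]
      simp only [add_tsub_cancel_left]
      exact Ideal.mul_mem_mul (hp i) (Ideal.pow_mem_pow haI _)
    · simp only [RingHom.coe_comp, RingHom.coe_coe, Function.comp_apply, Subalgebra.coe_val]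
      rw [aeval_eq_sum_range, Finset.sum_mul, map_sum]
      refine Finset.sum_congr rfl fun i hi => ?_
      obtain ⟨k, hk⟩ : ∃ k, p.natDegree = i + k :=
        ⟨p.natDegree - i, by have := Finset.mem_range.1 hi; omega⟩
      rw [Algebra.smul_def, map_mul, map_pow, hk, add_tsub_cancel_left, pow_add, inv_pow]
      field_simp
  · rintro ⟨N, y, hy, h⟩
    refine ⟨⟨monomial N y, reesAlgebra.monomial_mem.2 hy⟩, ?_⟩
    simp only [RingHom.coe_comp, RingHom.coe_coe, Function.comp_apply, Subalgebra.coe_val, aeval_monomial]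
    rw [← h, inv_pow]
    field_simp

theorem algebraMap_mem_chart {I : Ideal A} {a : A} (x : A) :
    algebraMap A F x ∈ chart F I a := by
  refine ⟨⟨monomial 0 x, reesAlgebra.monomial_mem.2 (by simp)⟩, ?_⟩
  simp [aeval_monomial]

theorem div_mem_chart {I : Ideal A} {a : A} {x : A} (hx : x ∈ I) :
    algebraMap A F x / algebraMap A F a ∈ chart F I a := by
  refine ⟨⟨monomial 1 x, reesAlgebra.monomial_mem.2 (by simpa using hx)⟩, ?_⟩
  simp [aeval_monomial, div_eq_mul_inv]

theorem chart_noeth [IsNoetherianRing A] (I : Ideal A) (a : A) : IsNoetherianRing (chart F I a) :=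
  isNoetherianRing_range _

theorem chart_mem_up {I : Ideal A} {a : A} (haI : a ∈ I) {x : F} {N M : ℕ} (hNM : N ≤ M)
    (h : ∃ y ∈ I ^ N, x * algebraMap A F a ^ N = algebraMap A F y) :
    ∃ y ∈ I ^ M, x * algebraMap A F a ^ M = algebraMap A F y := by
  obtain ⟨y, hy, h⟩ := h
  obtain ⟨k, rfl⟩ := Nat.exists_eq_add_of_le hNM
  refine ⟨y * a ^ k, ?_, ?_⟩
  · rw [pow_add]; exact Ideal.mul_mem_mul hy (Ideal.pow_mem_pow haI _)
  · rw [pow_add, ← mul_assoc, h, map_mul, map_pow]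

theorem isFractionRing_sub (T : Subring F) (hT : ∀ x : A, algebraMap A F x ∈ T) :
    IsFractionRing T F := by
  refine (isLocalization_iff _ _).2 ⟨?_, ?_, ?_⟩
  · rintro ⟨y, hy⟩
    have : y ≠ 0 := nonZeroDivisors.ne_zero hy
    rw [isUnit_iff_ne_zero]
    intro h; apply this; ext; exact h
  · intro z
    obtain ⟨⟨x, s⟩, hs⟩ := IsLocalization.surj (nonZeroDivisors A) z
    refine ⟨⟨⟨_, hT x⟩, ⟨⟨_, hT s.1⟩, ?_⟩⟩, ?_⟩
    · rw [mem_nonZeroDivisors_iff_ne_zero]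
      intro h
      have h1 : algebraMap A F s.1 = 0 := congrArg Subtype.val h
      exact ia_ne (nonZeroDivisors.ne_zero s.2) h1
    · exact hs
  · intro x y h
    exact ⟨1, by rw [show x = y from Subtype.ext h]⟩

theorem int_clear {R G : Type*} [CommRing R] [IsDomain R] [IsIntegrallyClosed R] [Field G] [Algebra R G]
    [IsFractionRing R G] (x : G) (f : G[X]) (hf : f.Monic) (hx : f.eval x = 0) (s : R)
    (hs : ∀ i, ∃ r : R, f.coeff i * algebraMap R G s = algebraMap R G r) :
    ∃ r : R, algebraMap R G s * x = algebraMap R G r := by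
  have hmon : (f.scaleRoots (algebraMap R G s)).Monic := monic_scaleRoots_iff _ |>.2 hf
  have hl : f.scaleRoots (algebraMap R G s) ∈ lifts (algebraMap R G) := by
    rw [lifts_iff_coeff_lifts]
    intro i
    rw [coeff_scaleRoots]
    by_cases hi : i < f.natDegree
    · obtain ⟨k, hk⟩ : ∃ k, f.natDegree - i = k + 1 := ⟨f.natDegree - i - 1, by omega⟩
      obtain ⟨r, hr⟩ := hs i
      refine ⟨r * s ^ k, ?_⟩
      rw [hk, pow_succ', ← mul_assoc, hr, map_mul, map_pow]
    · have h0 : f.natDegree - i = 0 := by omega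
      rw [h0, pow_zero, mul_one]
      rcases Nat.lt_or_eq_of_le (not_lt.1 hi) with h | h
      · exact ⟨0, by rw [coeff_eq_zero_of_natDegree_lt h, map_zero]⟩
      · refine ⟨1, ?_⟩
        rw [← h, hf.coeff_natDegree, map_one]
  obtain ⟨g, hg, -, hgm⟩ := lifts_and_natDegree_eq_and_monic hl hmon
  have hInt : IsIntegral R (algebraMap R G s * x) := by
    refine ⟨g, hgm, ?_⟩
    rw [← eval_map, hg]
    have := scaleRoots_eval₂_mul (p := f) (RingHom.id G) x (algebraMap R G s)
    rw [RingHom.id_apply, ← eval_map, Polynomial.map_id, ← eval_map, Polynomial.map_id, hx, mul_zero] at this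
    exact this
  obtain ⟨y, hy⟩ := IsIntegrallyClosed.isIntegral_iff.1 hInt
  exact ⟨y, hy.symm⟩

theorem chart_intClosed {I : Ideal A} {a : A} (haI : a ∈ I) (ha : a ≠ 0)
    (hI : IsIntegrallyClosed (reesAlgebra I)) {x : F} (hx : IsIntegral (chart F I a) x) :
    x ∈ chart F I a := by
  obtain ⟨f, hf, hfx⟩ := hx
  let G := FractionRing (reesAlgebra I)
  have hinj : Function.Injective (algebraMap A G) := by
    have h1 : Function.Injective (algebraMap A (reesAlgebra I)) := by
      intro x y h
      have := congrArg (fun p : reesAlgebra I => (p : A[X])) h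
      exact C_injective this
    have h2 : (algebraMap A G) = (algebraMap (reesAlgebra I) G).comp (algebraMap A (reesAlgebra I)) :=
      IsScalarTower.algebraMap_eq _ _ _
    rw [h2]
    exact (IsFractionRing.injective (reesAlgebra I) G).comp h1
  let ψ : F →+* FractionRing (reesAlgebra I) := IsFractionRing.lift hinj
  have hψ : ∀ y : A, ψ (algebraMap A F y) = algebraMap (reesAlgebra I) (FractionRing (reesAlgebra I)) (algebraMap A _ y) := by
    intro y
    rw [← IsScalarTower.algebraMap_apply]
    exact IsFractionRing.lift_algebraMap hinj y
  -- common exponent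
  have hN : ∃ N, ∀ i, ∃ y ∈ I ^ N, (f.coeff i : F) * algebraMap A F a ^ N = algebraMap A F y := by
    have h1 : ∀ i, ∃ N, ∃ y ∈ I ^ N, (f.coeff i : F) * algebraMap A F a ^ N = algebraMap A F y :=
      fun i => (mem_chart haI ha _).1 (f.coeff i).2
    choose N hN using h1
    refine ⟨(Finset.range (f.natDegree + 1)).sup N, fun i => ?_⟩
    by_cases hi : i ≤ f.natDegree
    · exact chart_mem_up haI (Finset.le_sup (f := N) (Finset.mem_range.2 (by omega))) (hN i)
    · refine ⟨0, Ideal.zero_mem _, ?_⟩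
      rw [coeff_eq_zero_of_natDegree_lt (by omega)]; simp
  obtain ⟨N, hN⟩ := hN
  let s : reesAlgebra I := ⟨monomial N (a ^ N), reesAlgebra.monomial_mem.2 (Ideal.pow_mem_pow haI _)⟩
  let t : A → (reesAlgebra I) → Prop := fun y p => (p : A[X]) = monomial N y
  let XN : ∀ y ∈ I ^ N, reesAlgebra I := fun y hy => ⟨monomial N y, reesAlgebra.monomial_mem.2 hy⟩
  have hsy : ∀ (c : F) (y : A) (hy : y ∈ I ^ N), c * algebraMap A F a ^ N = algebraMap A F y →
      ψ c * algebraMap (reesAlgebra I) (FractionRing (reesAlgebra I)) s = algebraMap (reesAlgebra I) (FractionRing (reesAlgebra I)) (XN y hy) := by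
    intro c y hy h
    have h0 : algebraMap (reesAlgebra I) (FractionRing (reesAlgebra I)) (algebraMap A _ (a ^ N)) ≠ 0 := by
      rw [← IsScalarTower.algebraMap_apply]
      intro h; apply pow_ne_zero N ha
      exact hinj (by rw [h, map_zero])
    apply mul_right_cancel₀ h0
    have h1 := congrArg ψ h
    rw [map_mul, ← map_pow, hψ, hψ] at h1
    rw [mul_right_comm, h1, ← map_mul, ← map_mul]
    congr 1
    ext1
    simp [s, XN, mul_comm, C_mul_monomial]
    rw [← C_pow, mul_comm (monomial N y), C_mul_monomial, mul_comm]
  obtain ⟨r, hr⟩ := int_clear (R := reesAlgebra I) (G := FractionRing (reesAlgebra I)) (ψ x)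
    (f.map (ψ.comp (chart F I a).subtype)) (hf.map _) (by
      rw [eval_map]
      have := congrArg ψ hfx
      rw [hom_eval₂, map_zero] at this
      exact this) s (by
      intro i
      obtain ⟨y, hy, h⟩ := hN i
      refine ⟨XN y hy, ?_⟩
      rw [coeff_map]
      exact hsy _ y hy h)
  obtain ⟨⟨p, q⟩, hpq⟩ := IsLocalization.surj (nonZeroDivisors A) x
  simp only at hpq
  have hq0 : q.1 ≠ 0 := nonZeroDivisors.ne_zero q.2
  rw [mem_chart haI ha]
  refine ⟨N, (r : A[X]).coeff N, (mem_reesAlgebra_iff _ _).1 r.2 N, ?_⟩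
  have h1 : s * algebraMap A _ p = r * algebraMap A _ q.1 := by
    apply IsFractionRing.injective (reesAlgebra I) (FractionRing (reesAlgebra I))
    rw [map_mul, map_mul, ← hr, ← hψ, ← hψ, ← hpq, map_mul]; ring
  have h2 := congrArg (fun z : reesAlgebra I => (z : A[X]).coeff N) h1
  simp [s, coeff_monomial, coeff_mul_C] at h2
  apply mul_right_cancel₀ (ia_ne (F := F) hq0)
  rw [mul_right_comm, hpq, ← map_mul, ← h2, map_mul, map_pow]; ring

theorem dim_step (T : Subring F) [IsNoetherianRing T] (hT : ∀ x : A, algebraMap A F x ∈ T)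
    (hd : ringKrullDim T ≤ 2) (y : F) : IsNoetherianRing (eval₂RingHom T.subtype y).range ∧
      ringKrullDim (eval₂RingHom T.subtype y).range ≤ 2 := by
  refine ⟨isNoetherianRing_range _, ?_⟩
  obtain ⟨⟨p, q⟩, hpq⟩ := IsLocalization.surj (nonZeroDivisors A) y
  simp only at hpq
  have hq0 : q.1 ≠ 0 := nonZeroDivisors.ne_zero q.2
  have h := ringKrullDim_succ_le_of_surjective (eval₂RingHom T.subtype y).rangeRestrict
    (RingHom.rangeRestrict_surjective _) (r := C ⟨_, hT q.1⟩ * X - C ⟨_, hT p⟩) (by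
      rw [mem_nonZeroDivisors_iff_ne_zero]
      intro h
      have := congrArg (fun p => ((Polynomial.coeff p 1 : T) : F)) h
      simp [coeff_C] at this) (by
      ext
      rw [RingHom.coe_rangeRestrict, coe_eval₂RingHom, eval₂_sub, eval₂_mul, eval₂_C, eval₂_X, eval₂_C]
      change algebraMap A F q.1 * y - algebraMap A F p = 0
      rw [mul_comm, hpq, sub_self])
  rw [Polynomial.ringKrullDim_of_isNoetherianRing] at h
  have h3 : ringKrullDim (eval₂RingHom T.subtype y).range + 1 ≤ 2 + 1 := h.trans (by gcongr)
  exact ENat.WithBot.add_le_add_one_right_iff.1 h3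

theorem dim_finite [IsNoetherianRing A] (hdim : ringKrullDim A ≤ 2) (s : Finset F) (B : Subring F)
    (hB : ∀ x : A, algebraMap A F x ∈ B) (hs : ∀ x ∈ s, x ∈ B) :
    ∃ T : Subring F, T ≤ B ∧ (∀ x : A, algebraMap A F x ∈ T) ∧ (∀ x ∈ s, x ∈ T) ∧
      IsNoetherianRing T ∧ ringKrullDim T ≤ 2 := by
  classical
  induction s using Finset.induction_on with
  | empty =>
    refine ⟨(algebraMap A F).range, ?_, fun x => ⟨x, rfl⟩, by simp, isNoetherianRing_range _, ?_⟩
    · rintro _ ⟨x, rfl⟩; exact hB x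
    · exact (ringKrullDim_le_of_surjective (algebraMap A F).rangeRestrict
        (RingHom.rangeRestrict_surjective _)).trans hdim
  | insert y s hy ih =>
    obtain ⟨T, hTB, hTA, hTs, hN, hd⟩ := ih (fun x hx => hs x (Finset.mem_insert_of_mem hx))
    obtain ⟨h1, h2⟩ := dim_step T hTA hd y
    have hTT : ∀ x ∈ T, x ∈ (eval₂RingHom T.subtype y).range := fun x hx => ⟨C ⟨x, hx⟩, by simp⟩
    refine ⟨(eval₂RingHom T.subtype y).range, ?_, fun x => hTT _ (hTA x), ?_, h1, h2⟩
    · rintro _ ⟨p, rfl⟩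
      rw [coe_eval₂RingHom, eval₂_eq_sum_range]
      refine Subring.sum_mem _ fun i _ => Subring.mul_mem _ (hTB (p.coeff i).2) (Subring.pow_mem _ (hs y (by simp)) _)
    · intro x hx
      rcases Finset.mem_insert.1 hx with rfl | hx
      · exact ⟨X, by simp⟩
      · exact hTT x (hTs x hx)

theorem chart_dim [IsNoetherianRing A] (hdim : ringKrullDim A ≤ 2) (I : Ideal A) (a : A) (haI : a ∈ I)
    (ha : a ≠ 0) : ringKrullDim (chart F I a) ≤ 2 := by
  classical
  have h0 : algebraMap A F a ≠ 0 := ia_ne ha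
  obtain ⟨s, hs⟩ := IsNoetherian.noetherian I
  obtain ⟨T, hTB, hTA, hTs, -, hd⟩ := dim_finite (F := F) hdim
    (s.image (fun x => algebraMap A F x / algebraMap A F a)) (chart F I a) algebraMap_mem_chart (by
      intro x hx
      obtain ⟨y, hy, rfl⟩ := Finset.mem_image.1 hx
      exact div_mem_chart (hs ▸ Submodule.subset_span hy))
  have hI : ∀ x ∈ I, algebraMap A F x / algebraMap A F a ∈ T := by
    intro x hx
    rw [← hs] at hx
    induction hx using Submodule.span_induction with
    | mem x hx => exact hTs _ (Finset.mem_image.2 ⟨x, hx, rfl⟩)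
    | zero => simp
    | add x y _ _ h1 h2 => rw [map_add, add_div]; exact T.add_mem h1 h2
    | smul c x _ h => rw [smul_eq_mul, map_mul, mul_div_assoc]; exact T.mul_mem (hTA c) h
  have hIN : ∀ N, ∀ x ∈ I ^ N, algebraMap A F x / algebraMap A F a ^ N ∈ T := by
    intro N
    induction N with
    | zero => intro x _; simpa using hTA x
    | succ N ih =>
      intro x hx
      rw [pow_succ] at hx
      refine Submodule.mul_induction_on hx ?_ ?_
      · intro u hu v hv
        have : algebraMap A F (u * v) / algebraMap A F a ^ (N + 1) =
          (algebraMap A F u / algebraMap A F a ^ N) * (algebraMap A F v / algebraMap A F a) := by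
            rw [map_mul, pow_succ, div_mul_div_comm]
        rw [this]
        exact T.mul_mem (ih u hu) (hI v hv)
      · intro u v h1 h2
        rw [map_add, add_div]; exact T.add_mem h1 h2
  have : T = chart F I a := by
    apply le_antisymm hTB
    intro x hx
    obtain ⟨N, y, hy, h⟩ := (mem_chart haI ha x).1 hx
    have := hIN N y hy
    rwa [← h, mul_div_cancel_right₀ _ (pow_ne_zero _ h0)] at this
  rw [← this]; exact hd
end chart

end Part4

section Part5

open Polynomial

theorem select {k A : Type*} [Field k] [Infinite k] [CommRing A] [Algebra k A] (I : Ideal A)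
    (V : Set (Ideal A)) (hV : V.Finite) (h : ∀ v ∈ V, ¬ I ≤ v) : ∃ a ∈ I, ∀ v ∈ V, a ∉ v := by
  classical
  let f : Ideal A → Subspace k I := fun v =>
    (v.restrictScalars k).comap ((I.restrictScalars k).subtype)
  have hf : ∀ v (x : I), x ∈ f v ↔ (x : A) ∈ v := fun v x => Iff.rfl
  have htop : (⊤ : Subspace k I) ∉ hV.toFinset.image f := by
    intro ht
    obtain ⟨v, hv, hvt⟩ := Finset.mem_image.1 ht
    apply h v (by simpa using hv)
    intro x hx
    have : (⟨x, hx⟩ : I) ∈ f v := by rw [hvt]; trivial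
    exact (hf v _).1 this
  have := Subspace.biUnion_ne_univ_of_top_notMem htop
  rw [Ne, Set.eq_univ_iff_forall] at this
  push Not at this
  obtain ⟨x, hx⟩ := this
  refine ⟨x, x.2, fun v hv hxv => hx ?_⟩
  simp only [Set.mem_iUnion]
  exact ⟨f v, Finset.mem_image.2 ⟨v, by simpa using hv, rfl⟩, (hf v x).2 hxv⟩

theorem ideal_sup_pow {A : Type*} [CommRing A] (E E' : Ideal A) (n n' : ℕ) :
    (E ⊔ E') ^ (n + n') ≤ E ^ n * (E ⊔ E') ^ n' ⊔ E' ^ n' * (E ⊔ E') ^ n := by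
  have h1 : (E ⊔ E') ^ (n + n') = (E + E') ^ (n + n') := rfl
  rw [h1, add_pow, Ideal.sum_eq_sup]
  refine Finset.sup_le fun i hi => ?_
  refine Ideal.mul_le_left.trans ?_ |>.trans' (le_refl _)
  have hi' := Finset.mem_range.1 hi
  by_cases hin : n ≤ i
  · refine le_sup_of_le_left ?_
    obtain ⟨j, rfl⟩ := Nat.exists_eq_add_of_le hin
    have : n' = j + (n + n' - (n + j)) := by omega
    calc E ^ (n + j) * E' ^ (n + n' - (n + j))
        = E ^ n * (E ^ j * E' ^ (n + n' - (n + j))) := by rw [pow_add, mul_assoc]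
      _ ≤ E ^ n * ((E ⊔ E') ^ j * (E ⊔ E') ^ (n + n' - (n + j))) :=
          Ideal.mul_mono_right (Ideal.mul_mono (Ideal.pow_right_mono le_sup_left _) (Ideal.pow_right_mono le_sup_right _))
      _ = E ^ n * (E ⊔ E') ^ n' := by rw [← pow_add, ← this]
  · refine le_sup_of_le_right ?_
    obtain ⟨j, hj⟩ : ∃ j, n + n' - i = n' + j := ⟨n - i, by omega⟩
    have : n = j + i := by omega
    calc E ^ i * E' ^ (n + n' - i)
        = E' ^ n' * (E' ^ j * E ^ i) := by rw [hj, pow_add]; ring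
      _ ≤ E' ^ n' * ((E ⊔ E') ^ j * (E ⊔ E') ^ i) :=
          Ideal.mul_mono_right (Ideal.mul_mono (Ideal.pow_right_mono le_sup_right _) (Ideal.pow_right_mono le_sup_left _))
      _ = E' ^ n' * (E ⊔ E') ^ n := by rw [← pow_add, ← this]

/-- joint reduction -/
def JR {A : Type*} [CommRing A] (I J : Ideal A) (a b : A) : Prop :=
  ∃ M, (I * J) ^ (M + 1) ≤ (Ideal.span {a} * J ⊔ Ideal.span {b} * I) * (I * J) ^ M

theorem gens_combine {A : Type*} [CommRing A] (K m X : Ideal A) (s : Finset A) (hs : ∀ e ∈ s, e ∈ K)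
    (h : ∀ e ∈ s, ∃ N, e ^ (N + 1) ∈ m * K ^ (N + 1) ⊔ X * K ^ N) :
    ∃ N, (Ideal.span (s : Set A)) ^ (N + 1) ≤ m * K ^ (N + 1) ⊔ X * K ^ N := by
  classical
  induction s using Finset.induction_on with
  | empty => exact ⟨0, by simp⟩
  | insert e s hes ih =>
    obtain ⟨n, hn⟩ := h e (by simp)
    obtain ⟨n', hn'⟩ := ih (fun e he => hs e (Finset.mem_insert_of_mem he))
      (fun e he => h e (Finset.mem_insert_of_mem he))
    have hle : Ideal.span {e} ⊔ Ideal.span (s : Set A) ≤ K := by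
      rw [sup_le_iff, Ideal.span_singleton_le_iff_mem, Ideal.span_le]
      exact ⟨hs e (by simp), fun x hx => hs x (Finset.mem_insert_of_mem hx)⟩
    refine ⟨n + 1 + n', ?_⟩
    rw [Finset.coe_insert, Ideal.span_insert, add_assoc]
    refine (ideal_sup_pow _ _ (n + 1) (n' + 1)).trans ?_
    have key : ∀ (a b : ℕ) (E : Ideal A), E ≤ m * K ^ (a + 1) ⊔ X * K ^ a →
        E * (Ideal.span {e} ⊔ Ideal.span (s : Set A)) ^ (b + 1) ≤
          m * K ^ (a + b + 1 + 1) ⊔ X * K ^ (a + b + 1) := by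
      intro a b E hE
      calc _ ≤ (m * K ^ (a + 1) ⊔ X * K ^ a) * K ^ (b + 1) :=
            Ideal.mul_mono hE (Ideal.pow_right_mono hle _)
        _ = _ := by rw [Ideal.sup_mul, mul_assoc, mul_assoc, ← pow_add, ← pow_add]; ring_nf
    refine sup_le ?_ ?_
    · refine (key n n' _ ?_).trans (le_of_eq (by ring_nf))
      rw [Ideal.span_singleton_pow, Ideal.span_singleton_le_iff_mem]; exact hn
    · exact (key n' n _ hn').trans (le_of_eq (by ring_nf))

section L1
variable {A : Type*} [CommRing A] [IsDomain A] [IsNoetherianRing A] [IsLocalRing A]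

theorem L1local (F : Type*) [Field F] [Algebra A F] [IsFractionRing A F]
    (hdim : ringKrullDim A ≤ 2) (x : A) (hxm : x ∈ IsLocalRing.maximalIdeal A)
    (hx0 : x ≠ 0) (I J : Ideal A) (g h : A) (hg : g ∈ I) (hh : h ∈ J) (hg0 : g ≠ 0) (hh0 : h ≠ 0) :
    ∃ V1 : Set (Ideal A), V1.Finite ∧ (∀ v ∈ V1, ¬ I ≤ v) ∧ ∀ a ∈ I, (∀ v ∈ V1, a ∉ v) →
      ∃ V2 : Set (Ideal A), V2.Finite ∧ (∀ v ∈ V2, ¬ J ≤ v) ∧ ∀ b ∈ J, (∀ v ∈ V2, b ∉ v) →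
        ∃ N, (g * h) ^ (N + 1) ∈ IsLocalRing.maximalIdeal A * (I * J) ^ (N + 1) ⊔
          (Ideal.span {a} * J ⊔ Ideal.span {b} * I) * (I * J) ^ N := by
  have hgh : g * h ∈ I * J := Ideal.mul_mem_mul hg hh
  have hgh0 : g * h ≠ 0 := mul_ne_zero hg0 hh0
  have hgF : algebraMap A F g ≠ 0 := ia_ne hg0
  have hhF : algebraMap A F h ≠ 0 := ia_ne hh0
  let Ch := chart F (I * J) (g * h)
  have : IsNoetherianRing Ch := chart_noeth _ _
  have hnc : NoChain Ch := noChain_of_dim (chart_dim hdim _ _ hgh hgh0)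
  let V : Ideal Ch → A → Ideal A := fun Q g =>
    { carrier := {x | ∃ q : Ch, q ∈ Q ∧ algebraMap A F x = (q : F) * algebraMap A F g}
      add_mem' := by
        rintro x y ⟨q, hq, h1⟩ ⟨q', hq', h2⟩
        exact ⟨q + q', Q.add_mem hq hq', by rw [map_add, h1, h2, Subring.coe_add]; ring⟩
      zero_mem' := ⟨0, Q.zero_mem, by simp⟩
      smul_mem' := by
        rintro c x ⟨q, hq, h1⟩
        exact ⟨⟨_, algebraMap_mem_chart c⟩ * q, Q.mul_mem_left _ hq, by
          rw [smul_eq_mul, map_mul, h1, Subring.coe_mul]; ring⟩ }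
  have hVmem : ∀ Q g x, x ∈ V Q g ↔ ∃ q : Ch, q ∈ Q ∧ algebraMap A F x = (q : F) * algebraMap A F g :=
    fun _ _ _ => Iff.rfl
  have hVg : ∀ (Q : Ideal Ch) (g : A), g ≠ 0 → Q.IsPrime → g ∉ V Q g := by
    intro Q g hg0 hQ hc
    obtain ⟨q, hq, h1⟩ := (hVmem _ _ _).1 hc
    have hgF : algebraMap A F g ≠ 0 := ia_ne hg0
    have : q = 1 := by
      ext
      apply mul_right_cancel₀ hgF
      rw [← h1]; simp
    exact hQ.ne_top ((Ideal.eq_top_iff_one _).2 (this ▸ hq))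
  let x' : Ch := ⟨algebraMap A F x, algebraMap_mem_chart x⟩
  have hx'0 : x' ≠ 0 := by
    intro h
    exact ia_ne (F := F) hx0 (congrArg Subtype.val h)
  refine ⟨(fun Q => V Q g) '' (Ideal.span {x'}).minimalPrimes,
    (Ideal.finite_minimalPrimes_of_isNoetherianRing Ch _).image _, ?_, ?_⟩
  · rintro _ ⟨Q, hQ, rfl⟩ hle
    exact hVg Q g hg0 hQ.1.1 (hle hg)
  intro a ha haV
  have ha' : algebraMap A F a / algebraMap A F g ∈ Ch := by
    have := div_mem_chart (F := F) (a := g * h) (Ideal.mul_mem_mul ha hh)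
    rwa [map_mul, map_mul, mul_div_mul_right _ _ hhF] at this
  let a' : Ch := ⟨_, ha'⟩
  have haQ : ∀ Q ∈ (Ideal.span {x'}).minimalPrimes, a' ∉ Q := by
    intro Q hQ hc
    exact haV _ ⟨Q, hQ, rfl⟩ ⟨a', hc, by simp only [a']; field_simp⟩
  refine ⟨(fun Q => V Q h) '' (Ideal.span {x'} ⊔ Ideal.span {a'}).minimalPrimes,
    (Ideal.finite_minimalPrimes_of_isNoetherianRing Ch _).image _, ?_, ?_⟩
  · rintro _ ⟨Q, hQ, rfl⟩ hle
    exact hVg Q h hh0 hQ.1.1 (hle hh)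
  intro b hb hbV
  have hb' : algebraMap A F b / algebraMap A F h ∈ Ch := by
    have := div_mem_chart (F := F) (a := g * h) (Ideal.mul_mem_mul hg hb)
    rwa [map_mul, map_mul, mul_div_mul_left _ _ hgF] at this
  let b' : Ch := ⟨_, hb'⟩
  have hbQ : ∀ Q ∈ (Ideal.span {x'} ⊔ Ideal.span {a'}).minimalPrimes, b' ∉ Q := by
    intro Q hQ hc
    exact hbV _ ⟨Q, hQ, rfl⟩ ⟨b', hc, by simp only [b']; field_simp⟩
  have htop : Ideal.span {x'} ⊔ Ideal.span {a'} ⊔ Ideal.span {b'} = ⊤ := by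
    by_contra hne
    obtain ⟨p, hp, hle⟩ := Ideal.exists_le_maximal _ hne
    rw [sup_le_iff, Ideal.span_singleton_le_iff_mem (x := b')] at hle
    have hpp := hp.isPrime
    obtain ⟨Q', hQ', hQ'p⟩ := Ideal.exists_minimalPrimes_le hle.1
    have hQp := hQ'.1.1
    have h2 := hQ'.1.2
    rw [sup_le_iff, Ideal.span_singleton_le_iff_mem (x := a')] at h2
    obtain ⟨Q, hQ, hQQ⟩ := Ideal.exists_minimalPrimes_le h2.1
    refine hnc ⊥ Q Q' p Ideal.isPrime_bot hQ.1.1 hQ'.1.1 hpp ?_ ?_ ?_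
    · rw [bot_lt_iff_ne_bot]
      rintro rfl
      exact hx'0 (by simpa using hQ.1.2 (Ideal.mem_span_singleton_self x'))
    · refine lt_of_le_of_ne hQQ ?_
      rintro rfl
      exact haQ _ hQ h2.2
    · refine lt_of_le_of_ne hQ'p ?_
      rintro rfl
      exact hbQ _ hQ' hle.2
  have h1 : (1 : Ch) ∈ Ideal.span {x'} ⊔ Ideal.span {a'} ⊔ Ideal.span {b'} := by rw [htop]; trivial
  obtain ⟨y, hy, z, hz, h1⟩ := Submodule.mem_sup.1 h1
  obtain ⟨y1, hy1, y2, hy2, rfl⟩ := Submodule.mem_sup.1 hy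
  obtain ⟨c1, rfl⟩ := Ideal.mem_span_singleton.1 hy1
  obtain ⟨c2, rfl⟩ := Ideal.mem_span_singleton.1 hy2
  obtain ⟨c3, rfl⟩ := Ideal.mem_span_singleton.1 hz
  obtain ⟨N1, hN1⟩ := (mem_chart hgh hgh0 _).1 c1.2
  obtain ⟨N2, hN2⟩ := (mem_chart hgh hgh0 _).1 c2.2
  obtain ⟨N3, hN3⟩ := (mem_chart hgh hgh0 _).1 c3.2
  obtain ⟨z1, hz1, e1⟩ := chart_mem_up hgh (show N1 ≤ N1 + N2 + N3 by omega) hN1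
  obtain ⟨z2, hz2, e2⟩ := chart_mem_up hgh (show N2 ≤ N1 + N2 + N3 by omega) hN2
  obtain ⟨z3, hz3, e3⟩ := chart_mem_up hgh (show N3 ≤ N1 + N2 + N3 by omega) hN3
  refine ⟨N1 + N2 + N3, ?_⟩
  set N := N1 + N2 + N3
  have h1' : algebraMap A F x * (c1 : F) + algebraMap A F a / algebraMap A F g * c2 +
      algebraMap A F b / algebraMap A F h * c3 = 1 := congrArg Subtype.val h1
  have hfin : (g * h) ^ (N + 1) = x * (z1 * (g * h)) + (a * h * z2 + b * g * z3) := by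
    apply IsFractionRing.injective A F
    simp only [map_mul, map_pow, map_add] at e1 e2 e3 ⊢
    rw [← e1, ← e2, ← e3]
    calc (algebraMap A F g * algebraMap A F h) ^ (N + 1) =
      (algebraMap A F x * (c1 : F) + algebraMap A F a / algebraMap A F g * c2 +
      algebraMap A F b / algebraMap A F h * c3) * (algebraMap A F g * algebraMap A F h) ^ (N + 1) := by rw [h1', one_mul]
      _ = _ := by rw [pow_succ]; field_simp; ring
  rw [hfin]
  refine Submodule.add_mem_sup ?_ ?_
  · refine Ideal.mul_mem_mul hxm ?_
    rw [pow_succ]; exact Ideal.mul_mem_mul hz1 hgh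
  · refine Ideal.add_mem _ ?_ ?_
    · exact Ideal.mul_mem_mul (Ideal.mem_sup_left (Ideal.mul_mem_mul (Ideal.mem_span_singleton_self a) hh)) hz2
    · exact Ideal.mul_mem_mul (Ideal.mem_sup_right (Ideal.mul_mem_mul (Ideal.mem_span_singleton_self b) hg)) hz3

theorem L1 (hdim : ringKrullDim A ≤ 2) (x : A) (hxm : x ∈ IsLocalRing.maximalIdeal A)
    (hx0 : x ≠ 0) (I J : Ideal A) :
    ∃ V1 : Set (Ideal A), V1.Finite ∧ (∀ v ∈ V1, ¬ I ≤ v) ∧ ∀ a ∈ I, (∀ v ∈ V1, a ∉ v) →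
      ∃ V2 : Set (Ideal A), V2.Finite ∧ (∀ v ∈ V2, ¬ J ≤ v) ∧ ∀ b ∈ J, (∀ v ∈ V2, b ∉ v) →
        JR I J a b := by
  classical
  obtain ⟨s, hs⟩ := IsNoetherian.noetherian I
  obtain ⟨t, ht⟩ := IsNoetherian.noetherian J
  have hsI : ∀ g ∈ s, g ∈ I := fun g hg => hs ▸ Submodule.subset_span hg
  have htJ : ∀ g ∈ t, g ∈ J := fun g hg => ht ▸ Submodule.subset_span hg
  let ι := {p : A × A // p ∈ s ×ˢ t ∧ p.1 ≠ 0 ∧ p.2 ≠ 0}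
  have : Finite ι := by
    refine Finite.of_injective (β := (s ×ˢ t : Finset (A × A))) (fun p => ⟨p.1, p.2.1⟩) ?_
    intro p q h
    exact Subtype.ext (congrArg (fun z : (s ×ˢ t : Finset (A × A)) => z.1) h)
  have hloc := fun p : ι => L1local (FractionRing A) hdim x hxm hx0 I J p.1.1 p.1.2
    (hsI _ (Finset.mem_product.1 p.2.1).1) (htJ _ (Finset.mem_product.1 p.2.1).2) p.2.2.1 p.2.2.2
  choose V1 hV1 hV1I hV1a using hloc
  refine ⟨⋃ p, V1 p, Set.finite_iUnion hV1, ?_, ?_⟩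
  · intro v hv
    obtain ⟨p, hp⟩ := Set.mem_iUnion.1 hv
    exact hV1I p v hp
  intro a ha hav
  choose V2 hV2 hV2J hV2b using fun p : ι => hV1a p a ha (fun v hv => hav v (Set.mem_iUnion.2 ⟨p, hv⟩))
  refine ⟨⋃ p, V2 p, Set.finite_iUnion hV2, ?_, ?_⟩
  · intro v hv
    obtain ⟨p, hp⟩ := Set.mem_iUnion.1 hv
    exact hV2J p v hp
  intro b hb hbv
  have key := fun p : ι => hV2b p b hb (fun v hv => hbv v (Set.mem_iUnion.2 ⟨p, hv⟩))
  obtain ⟨N, hN⟩ := gens_combine (I * J) (IsLocalRing.maximalIdeal A)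
    (Ideal.span {a} * J ⊔ Ideal.span {b} * I) ((s ×ˢ t).image (fun p => p.1 * p.2)) (by
      intro e he
      obtain ⟨p, hp, rfl⟩ := Finset.mem_image.1 he
      exact Ideal.mul_mem_mul (hsI _ (Finset.mem_product.1 hp).1) (htJ _ (Finset.mem_product.1 hp).2)) (by
      intro e he
      obtain ⟨p, hp, rfl⟩ := Finset.mem_image.1 he
      by_cases h1 : p.1 = 0
      · exact ⟨0, by simp [h1]⟩
      by_cases h2 : p.2 = 0
      · exact ⟨0, by simp [h2]⟩
      exact key ⟨p, hp, h1, h2⟩)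
  have hspan : Ideal.span (((s ×ˢ t).image (fun p => p.1 * p.2) : Finset A) : Set A) = I * J := by
    rw [← hs, ← ht]
    change _ = Ideal.span _ * Ideal.span _
    rw [Ideal.span_mul_span']
    congr 1
    ext z
    simp [Set.mem_mul, Finset.mem_image]
  rw [hspan] at hN
  refine ⟨N, Submodule.le_of_le_smul_of_le_jacobson_bot (I := IsLocalRing.maximalIdeal A)
    (IsNoetherian.noetherian _) (IsLocalRing.maximalIdeal_le_jacobson _) ?_⟩
  rw [sup_comm, smul_eq_mul]; exact hN
end L1

end Part5

section Part6

open Polynomial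

/-- the element `y t^n` of the Rees algebra -/
noncomputable def rt {A : Type*} [CommRing A] (I : Ideal A) (n : ℕ) (y : A) (hy : y ∈ I ^ n) : reesAlgebra I :=
  ⟨monomial n y, reesAlgebra.monomial_mem.2 hy⟩

theorem rt_one {A : Type*} [CommRing A] {I : Ideal A} {y : A} (hy : y ∈ I) : y ∈ I ^ 1 := by rwa [pow_one]

theorem rees_coeff_mem {A : Type*} [CommRing A] {I : Ideal A} (r : reesAlgebra I) (n : ℕ) :
    (r : A[X]).coeff n ∈ I ^ n := r.2 n

theorem rees_mem_of {A : Type*} [CommRing A] {I : Ideal A} (P : Ideal (reesAlgebra I))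
    (h1 : ∀ d (hd : d ∈ I), rt I 1 d (rt_one hd) ∈ P) (r : reesAlgebra I)
    (h0 : algebraMap A (reesAlgebra I) ((r : A[X]).coeff 0) ∈ P) : r ∈ P := by
  have hm : ∀ n, ∀ y ∈ I ^ (n + 1), ∃ h, rt I (n + 1) y h ∈ P := by
    intro n y hy
    rw [pow_succ'] at hy
    refine Submodule.mul_induction_on (C := fun y => ∃ h, rt I (n + 1) y h ∈ P) hy ?_ ?_
    · intro d hd z hz
      refine ⟨by rw [pow_succ']; exact Ideal.mul_mem_mul hd hz, ?_⟩
      have h := P.mul_mem_right (rt I n z hz) (h1 d hd)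
      convert h using 1
      apply Subtype.ext
      simp [rt, monomial_mul_monomial, add_comm]
    · rintro y z ⟨hy, hy'⟩ ⟨hz, hz'⟩
      refine ⟨Ideal.add_mem _ hy hz, ?_⟩
      convert P.add_mem hy' hz' using 1
      apply Subtype.ext
      simp [rt]
  have hs : r = ∑ n ∈ (r : A[X]).support, rt I n _ (rees_coeff_mem r n) := by
    apply Subtype.ext
    rw [AddSubmonoidClass.coe_finsetSum]
    exact (r : A[X]).as_sum_support
  rw [hs]
  refine Ideal.sum_mem _ fun n _ => ?_
  rcases n with _ | n
  · exact h0
  · exact (hm n _ (rees_coeff_mem r _)).2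

theorem rees_alg_coe {A : Type*} [CommRing A] {I : Ideal A} (x : A) :
    ((algebraMap A (reesAlgebra I) x : reesAlgebra I) : A[X]) = C x := rfl

theorem L0 {A : Type*} [CommRing A] [IsDomain A] [IsNoetherianRing A] (I : Ideal A) (hI0 : I ≠ ⊥)
    (hn : IsIntegrallyClosed (reesAlgebra I)) : ∃ V : Set (Ideal A), V.Finite ∧ (∀ v ∈ V, ¬ I ≤ v) ∧
      ∀ d ∈ I, (∀ v ∈ V, d ∉ v) → ∀ n w, d * w ∈ I ^ (n + 1) → w ∈ I ^ n := by
  obtain ⟨x, hxI, hx0⟩ := Submodule.exists_mem_ne_zero_of_ne_bot hI0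
  set X0 : reesAlgebra I := algebraMap A _ x with hX0
  have hX0' : X0 ≠ 0 := by
    intro h
    have : (X0 : A[X]) = 0 := by rw [h]; rfl
    rw [hX0, rees_alg_coe, C_eq_zero] at this
    exact hx0 this
  let vP : Ideal (reesAlgebra I) → Ideal A := fun P =>
    { carrier := {d | ∃ h : d ∈ I ^ 1, rt I 1 d h ∈ P}
      zero_mem' := ⟨zero_mem _, by convert P.zero_mem using 1; apply Subtype.ext; simp [rt]⟩
      add_mem' := by
        rintro y z ⟨hy, hy'⟩ ⟨hz, hz'⟩
        refine ⟨Ideal.add_mem _ hy hz, ?_⟩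
        convert P.add_mem hy' hz' using 1
        apply Subtype.ext
        simp [rt]
      smul_mem' := by
        rintro c y ⟨hy, hy'⟩
        refine ⟨Ideal.mul_mem_left _ _ hy, ?_⟩
        convert P.mul_mem_left (algebraMap A _ c) hy' using 1
        apply Subtype.ext
        simp [rt, rees_alg_coe, C_mul_monomial] }
  refine ⟨{v | v ∈ vP '' (Ideal.span {X0}).minimalPrimes ∧ ¬ I ≤ v}, ?_, fun v hv => hv.2, ?_⟩
  · exact ((Ideal.finite_minimalPrimes_of_isNoetherianRing _ _).image vP).subset fun v hv => hv.1
  intro d hd hdV n w hdw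
  by_contra hw
  have hxw : x ^ n * w ∈ I ^ n := Ideal.mul_mem_right _ _ (Ideal.pow_mem_pow hxI n)
  have he : rt I n (x ^ n * w) hxw ∉ Ideal.span {X0 ^ n} := by
    intro h
    obtain ⟨r, hr⟩ := Ideal.mem_span_singleton'.1 h
    have h2 := congrArg (fun z : reesAlgebra I => (z : A[X]).coeff n) hr
    simp only [rt, coeff_monomial, if_true, MulMemClass.coe_mul, SubmonoidClass.coe_pow, hX0, rees_alg_coe,
      ← C_pow, coeff_mul_C] at h2
    rw [mul_comm] at h2
    have h3 := mul_left_cancel₀ (pow_ne_zero n hx0) h2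
    exact hw (h3 ▸ rees_coeff_mem r n)
  obtain ⟨P, hP, hPe⟩ := colon_exists _ _ he
  have hPp := hP.1
  have hXP : X0 ∈ P := hPp.mem_of_pow_mem n (hPe _ (Ideal.mul_mem_right _ _ (Ideal.mem_span_singleton_self _)))
  have hPmin : P ∈ (Ideal.span {X0}).minimalPrimes := by
    refine ⟨⟨hPp, (Ideal.span_singleton_le_iff_mem _).2 hXP⟩, ?_⟩
    rintro Q ⟨hQ, hQX⟩ hQP
    refine (colonPrime_min (pow_ne_zero n hX0') hP hQ hQP ?_).ge
    rintro rfl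
    exact hX0' ((Ideal.span_singleton_le_iff_mem _).1 hQX)
  have hdP : rt I 1 d (rt_one hd) ∈ P := by
    apply hPe
    refine Ideal.mem_span_singleton'.2 ⟨rt I (n + 1) (d * w) hdw, ?_⟩
    apply Subtype.ext
    simp only [rt, hX0, MulMemClass.coe_mul, SubmonoidClass.coe_pow, rees_alg_coe, ← C_pow, monomial_mul_C,
      monomial_mul_monomial]
    rw [add_comm 1 n]; congr 1; ring
  refine hdV (vP P) ⟨⟨P, hPmin, rfl⟩, ?_⟩ ⟨_, hdP⟩
  intro hIP
  let φ : reesAlgebra I →+* A := (constantCoeff (R := A)).comp (reesAlgebra I).val.toRingHom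
  have hφ : ∀ r, φ r = (r : A[X]).coeff 0 := fun r => rfl
  have hker : RingHom.ker φ ≤ P := by
    intro r hr
    refine rees_mem_of P (fun d hd => (hIP hd).2) r ?_
    rw [RingHom.mem_ker, hφ] at hr
    rw [hr, map_zero]; exact P.zero_mem
  have hkp : (RingHom.ker φ).IsPrime := RingHom.ker_isPrime φ
  have := colonPrime_min (pow_ne_zero n hX0') hP hkp hker (by
    intro hb
    have : rt I 1 x (rt_one hxI) ∈ RingHom.ker φ := by
      rw [RingHom.mem_ker, hφ]; simp [rt, coeff_monomial]
    rw [hb] at this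
    have h2 := congrArg Subtype.val this
    simp [rt] at h2
    exact hx0 h2)
  rw [← this, RingHom.mem_ker, hφ, hX0, rees_alg_coe, coeff_C_zero] at hXP
  exact hx0 hXP

end Part6

section Part7

open Polynomial RingTheory.Sequence
set_option linter.unusedSectionVars false

theorem exists_mid {A : Type*} [CommRing A] [IsDomain A] [IsLocalRing A] (hdim : ringKrullDim A = 2) :
    ∃ Q : Ideal A, Q.IsPrime ∧ ⊥ < Q ∧ Q < IsLocalRing.maximalIdeal A := by
  obtain ⟨l, hl⟩ := (Order.le_krullDim_iff (α := PrimeSpectrum A) (n := 2)).1 hdim.ge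
  have h01 : l ⟨0, by omega⟩ < l ⟨1, by omega⟩ := l.strictMono (by simp [Fin.lt_def])
  have h12 : l ⟨1, by omega⟩ < l ⟨2, by omega⟩ := l.strictMono (by simp [Fin.lt_def])
  refine ⟨(l ⟨1, by omega⟩).asIdeal, (l ⟨1, by omega⟩).2, ?_, ?_⟩
  · exact lt_of_le_of_lt bot_le ((PrimeSpectrum.asIdeal_lt_asIdeal _ _).2 h01)
  · exact lt_of_lt_of_le ((PrimeSpectrum.asIdeal_lt_asIdeal _ _).2 h12)
      (IsLocalRing.le_maximalIdeal (l ⟨2, by omega⟩).2.ne_top)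

section A
variable {A : Type*} [CommRing A] [IsDomain A] [IsNoetherianRing A] [IsLocalRing A]

/-- primary to the maximal ideal -/
def Prim (I : Ideal A) : Prop := ∃ n : ℕ, IsLocalRing.maximalIdeal A ^ n ≤ I

theorem Prim.mono {I J : Ideal A} (h : Prim I) (hIJ : I ≤ J) : Prim J :=
  h.imp fun _ hn => hn.trans hIJ

theorem Prim.ne_bot {I : Ideal A} (h : Prim I) (hdim : ringKrullDim A = 2) : I ≠ ⊥ := by
  rintro rfl
  obtain ⟨n, hn⟩ := h
  obtain ⟨Q, hQ, h1, h2⟩ := exists_mid hdim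
  have : IsLocalRing.maximalIdeal A ≤ ⊥ := (Ideal.isPrime_bot (α := A)).le_of_pow_le hn
  exact absurd (h1.trans h2) (not_lt_of_ge this)

theorem Prim.mul {I J : Ideal A} (hI : Prim I) (hJ : Prim J) : Prim (I * J) := by
  obtain ⟨n, hn⟩ := hI
  obtain ⟨m, hm⟩ := hJ
  exact ⟨n + m, by rw [pow_add]; exact Ideal.mul_mono hn hm⟩

theorem Prim.pow {I : Ideal A} (hI : Prim I) (k : ℕ) : Prim (I ^ k) := by
  obtain ⟨n, hn⟩ := hI
  exact ⟨n * k, by rw [pow_mul]; exact Ideal.pow_right_mono hn k⟩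

theorem Prim.le_prime {I Q : Ideal A} (hI : Prim I) (hQ : Q.IsPrime) (h : I ≤ Q) :
    IsLocalRing.maximalIdeal A ≤ Q := by
  obtain ⟨n, hn⟩ := hI
  exact hQ.le_of_pow_le (hn.trans h)

theorem Prim.sup_pow {a b : A} (h : Prim (Ideal.span {a} ⊔ Ideal.span {b})) (n m : ℕ) :
    Prim (Ideal.span {a ^ n} ⊔ Ideal.span {b ^ m}) := by
  refine (h.pow (n + m)).mono ((ideal_sup_pow _ _ n m).trans ?_)
  rw [← Ideal.span_singleton_pow, ← Ideal.span_singleton_pow]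
  exact sup_le_sup Ideal.mul_le_left Ideal.mul_le_left

theorem JR.prim {I J : Ideal A} {a b : A} (h : JR I J a b) (hI : Prim I) (hJ : Prim J) :
    Prim (Ideal.span {a} ⊔ Ideal.span {b}) := by
  obtain ⟨M, hM⟩ := h
  refine ((hI.mul hJ).pow (M + 1)).mono (hM.trans (Ideal.mul_le_left.trans ?_))
  exact sup_le_sup Ideal.mul_le_left Ideal.mul_le_left

theorem regA [IsIntegrallyClosed A] (hdim : ringKrullDim A = 2) {a b : A} (ha : a ≠ 0)
    (h : Prim (Ideal.span {a} ⊔ Ideal.span {b})) : RegMod (Ideal.span {a}) b := by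
  intro r hr
  by_contra hra
  obtain ⟨P, hP, hPe⟩ := colon_exists _ _ hra
  have haP : a ∈ P := hPe _ (Ideal.mul_mem_right _ _ (Ideal.mem_span_singleton_self _))
  have hbP : b ∈ P := hPe _ hr
  have hm := h.le_prime hP.1 (sup_le ((Ideal.span_singleton_le_iff_mem _).2 haP) ((Ideal.span_singleton_le_iff_mem _).2 hbP))
  obtain ⟨Q, hQ, h1, h2⟩ := exists_mid hdim
  have := colonPrime_min ha hP hQ (h2.le.trans hm) h1.ne'
  rw [this] at h2
  exact absurd h2 (not_lt_of_ge hm)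

theorem regA_pow [IsIntegrallyClosed A] (hdim : ringKrullDim A = 2) {a b : A} (ha : a ≠ 0)
    (h : Prim (Ideal.span {a} ⊔ Ideal.span {b})) (n m : ℕ) : RegMod (Ideal.span {a ^ n}) (b ^ m) :=
  regA hdim (pow_ne_zero n ha) (h.sup_pow n m)
end A

theorem RegMod.loc {R : Type*} [CommRing R] (S : Submonoid R) (L : Type*) [CommRing L] [Algebra R L]
    [IsLocalization S L] {i : Ideal R} {x : R} (h : RegMod i x) :
    RegMod (i.map (algebraMap R L)) (algebraMap R L x) := by
  intro r hr
  obtain ⟨⟨r', s⟩, hrs⟩ := IsLocalization.surj S r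
  have hu : IsUnit (algebraMap R L s) := IsLocalization.map_units L s
  have h1 : algebraMap R L (x * r') ∈ i.map (algebraMap R L) := by
    rw [map_mul, ← hrs, ← mul_assoc]; exact Ideal.mul_mem_right _ _ hr
  rw [IsLocalization.algebraMap_mem_map_algebraMap_iff S] at h1
  obtain ⟨m, hm, hmx⟩ := h1
  have h2 : m * r' ∈ i := h _ (by convert hmx using 1; ring)
  have h3 : algebraMap R L r' ∈ i.map (algebraMap R L) := by
    rw [IsLocalization.algebraMap_mem_map_algebraMap_iff S]; exact ⟨m, hm, h2⟩
  rw [← hrs] at h3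
  exact (Ideal.mul_unit_mem_iff_mem _ hu).1 h3

theorem cm_three {R : Type*} [CommRing R] [IsDomain R] (hR : IsCohenMacaulayLocalRing R) [h : IsLocalRing R]
    (hc : ¬ NoChain R) : ∃ u v w : R, u ∈ IsLocalRing.maximalIdeal R ∧ v ∈ IsLocalRing.maximalIdeal R ∧
      w ∈ IsLocalRing.maximalIdeal R ∧ u ≠ 0 ∧ RegMod (Ideal.span {u}) v ∧
        RegMod (Ideal.span {u} ⊔ Ideal.span {v}) w := by
  obtain ⟨_, h', rs, hm, hreg, hlen⟩ := hR
  match rs with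
  | [] => exact absurd (noChain_of_dim (by rw [← hlen]; simp)) hc
  | [_] => exact absurd (noChain_of_dim (by rw [← hlen]; simp)) hc
  | [_, _] => exact absurd (noChain_of_dim (by rw [← hlen]; simp)) hc
  | u :: v :: w :: rest =>
    have hw := hreg.toIsWeaklyRegular
    have h3 : IsWeaklyRegular R [u, v, w] :=
      ((isWeaklyRegular_append_iff R [u, v, w] rest).1 (by simpa using hw)).1
    have h2 := (regMod_iff [u, v] w).1 (by simpa using h3)
    have h1 := (regMod_iff [u] v).1 (by simpa using h2.1)
    have h0 := (regMod_iff [] u).1 (by simpa using h1.1)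
    refine ⟨u, v, w, hm _ (by simp), hm _ (by simp), hm _ (by simp), ?_, ?_, ?_⟩
    · rintro rfl
      have := h0.2 1 (by simp)
      simp at this
    · simpa [Ideal.ofList_singleton] using h1.2
    · simpa [Ideal.ofList_cons, Ideal.ofList_singleton] using h2.2

theorem not_noChain_loc {R : Type*} [CommRing R] (P0 P1 P2 P3 : Ideal R) (h0 : P0.IsPrime) (h1 : P1.IsPrime)
  (h2 : P2.IsPrime) (h3 : P3.IsPrime) (h01 : P0 < P1) (h12 : P1 < P2) (h23 : P2 < P3) :
    ¬ NoChain (Localization.AtPrime P3) := by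
  intro h
  have hp : ∀ Q : Ideal R, Q.IsPrime → Q ≤ P3 → (Q.map (algebraMap R (Localization.AtPrime P3))).IsPrime ∧
      (Q.map (algebraMap R (Localization.AtPrime P3))).comap (algebraMap R _) = Q := by
    intro Q hQ hQP
    have hd : Disjoint (P3.primeCompl : Set R) (Q : Set R) := by
      rw [Set.disjoint_left]; exact fun x hx hxQ => hx (hQP hxQ)
    exact ⟨IsLocalization.isPrime_of_isPrime_disjoint P3.primeCompl _ Q hQ hd,
      IsLocalization.under_map_of_isPrime_disjoint P3.primeCompl _ hQ hd⟩
  have hlt : ∀ Q Q' : Ideal R, Q.IsPrime → Q'.IsPrime → Q < Q' → Q' ≤ P3 →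
      Q.map (algebraMap R (Localization.AtPrime P3)) < Q'.map (algebraMap R (Localization.AtPrime P3)) := by
    intro Q Q' hQ hQ' hlt hle
    refine lt_of_le_of_ne (Ideal.map_mono hlt.le) fun he => hlt.ne ?_
    rw [← (hp Q hQ (hlt.le.trans hle)).2, he, (hp Q' hQ' hle).2]
  exact h _ _ _ _ (hp P0 h0 (h01.trans (h12.trans h23)).le).1 (hp P1 h1 (h12.trans h23).le).1
    (hp P2 h2 h23.le).1 (hp P3 h3 le_rfl).1 (hlt _ _ h0 h1 h01 (h12.trans h23).le) (hlt _ _ h1 h2 h12 h23.le)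
    (hlt _ _ h2 h3 h23 le_rfl)

end Part7

section Part8

open Polynomial RingTheory.Sequence
set_option linter.unusedSectionVars false

theorem rees_mem_of_terms {A : Type*} [CommRing A] {I : Ideal A} (P : Ideal (reesAlgebra I)) (r : reesAlgebra I)
    (h : ∀ n, rt I n _ (rees_coeff_mem r n) ∈ P) : r ∈ P := by
  have hs : r = ∑ n ∈ (r : A[X]).support, rt I n _ (rees_coeff_mem r n) := by
    apply Subtype.ext
    rw [AddSubmonoidClass.coe_finsetSum]
    exact (r : A[X]).as_sum_support
  rw [hs]
  exact Ideal.sum_mem _ fun n _ => h n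

theorem rt_congr {A : Type*} [CommRing A] {I : Ideal A} {n : ℕ} {y z : A} (hy : y ∈ I ^ n) (h : y = z) :
    rt I n y hy = rt I n z (h ▸ hy) := by subst h; rfl

theorem rt_alg_mul {A : Type*} [CommRing A] {I : Ideal A} {n : ℕ} {a y : A} (hy : y ∈ I ^ n) (h : a * y ∈ I ^ n) :
    rt I n (a * y) h = algebraMap A _ a * rt I n y hy := by
  apply Subtype.ext; simp [rt, C_mul_monomial]

theorem rt_add {A : Type*} [CommRing A] {I : Ideal A} {n : ℕ} {y z : A} (hy : y ∈ I ^ n) (hz : z ∈ I ^ n)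
    (h : y + z ∈ I ^ n) : rt I n (y + z) h = rt I n y hy + rt I n z hz := by
  apply Subtype.ext; simp [rt]

theorem rt_mul {A : Type*} [CommRing A] {I : Ideal A} {n m : ℕ} {y z : A} (hy : y ∈ I ^ n) (hz : z ∈ I ^ m)
    (h : y * z ∈ I ^ (n + m)) : rt I (n + m) (y * z) h = rt I n y hy * rt I m z hz := by
  apply Subtype.ext; simp [rt, monomial_mul_monomial]

theorem rt_pow {A : Type*} [CommRing A] {I : Ideal A} {y : A} (hy : y ∈ I ^ 1) (n : ℕ) 
    (h : y ^ n ∈ I ^ n) : rt I n (y ^ n) h = rt I 1 y hy ^ n := by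
  apply Subtype.ext; simp [rt, monomial_pow]

theorem coeff_rt_mul {A : Type*} [CommRing A] {I : Ideal A} {y : A} (hy : y ∈ I ^ 1) (r : reesAlgebra I) (n : ℕ) :
    ((rt I 1 y hy * r : reesAlgebra I) : A[X]).coeff (n + 1) = y * (r : A[X]).coeff n := by
  simp [rt, ← C_mul_X_eq_monomial, mul_assoc, coeff_C_mul, coeff_X_mul]

theorem coeff_rt_mul_zero {A : Type*} [CommRing A] {I : Ideal A} {y : A} (hy : y ∈ I ^ 1) (r : reesAlgebra I) :
    ((rt I 1 y hy * r : reesAlgebra I) : A[X]).coeff 0 = 0 := by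
  simp [rt, ← C_mul_X_eq_monomial, mul_assoc, coeff_C_mul, coeff_X_mul_zero]

theorem coeff_alg_mul {A : Type*} [CommRing A] {I : Ideal A} (y : A) (r : reesAlgebra I) (n : ℕ) :
    ((algebraMap A _ y * r : reesAlgebra I) : A[X]).coeff n = y * (r : A[X]).coeff n := by
  simp [coeff_C_mul]

section A
variable {A : Type*} [CommRing A] [IsDomain A] [IsNoetherianRing A] [IsLocalRing A]

theorem alg_ne_zero {I : Ideal A} {a : A} (ha : a ≠ 0) : algebraMap A (reesAlgebra I) a ≠ 0 := by
  intro h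
  have := congrArg Subtype.val h
  rw [rees_alg_coe] at this
  exact ha (by simpa using this)

/-- `a, bt` is regular on the Rees algebra -/
theorem rees_reg {I : Ideal A} {a b : A} (ha : a ≠ 0) (hb : b ∈ I) (hab : RegMod (Ideal.span {a}) b)
    (hb0 : ∀ n w, b * w ∈ I ^ (n + 1) → w ∈ I ^ n) :
    RegMod (Ideal.span {algebraMap A (reesAlgebra I) a}) (rt I 1 b (rt_one hb)) := by
  intro r hr
  obtain ⟨s, hs⟩ := Ideal.mem_span_singleton'.1 hr
  refine rees_mem_of_terms _ _ fun n => ?_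
  have h1 := congrArg (fun z : reesAlgebra I => (z : A[X]).coeff (n + 1)) hs
  simp only [coeff_rt_mul] at h1
  rw [mul_comm, coeff_alg_mul] at h1
  obtain ⟨w, hw⟩ := Ideal.mem_span_singleton'.1
    (hab ((r : A[X]).coeff n) (Ideal.mem_span_singleton'.2 ⟨_, by rw [← h1, mul_comm]⟩))
  have h2 : b * w = (s : A[X]).coeff (n + 1) := by
    apply mul_left_cancel₀ ha; rw [h1, ← hw]; ring
  have h3 : w ∈ I ^ n := hb0 n w (h2 ▸ rees_coeff_mem s _)
  rw [rt_congr _ (hw.symm.trans (mul_comm _ _)), rt_alg_mul h3]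
  exact Ideal.mul_mem_right _ _ (Ideal.mem_span_singleton_self _)

/-- the irrelevant maximal ideal -/
noncomputable def reesM (I : Ideal A) : Ideal (reesAlgebra I) :=
  (IsLocalRing.maximalIdeal A).comap ((constantCoeff (R := A)).comp (reesAlgebra I).val.toRingHom)

theorem mem_reesM {I : Ideal A} (r : reesAlgebra I) : r ∈ reesM I ↔ (r : A[X]).coeff 0 ∈ IsLocalRing.maximalIdeal A :=
  Iff.rfl

theorem reesM_prime (I : Ideal A) : (reesM I).IsPrime := Ideal.IsPrime.comap _

theorem rees_not_noChain (hdim : ringKrullDim A = 2) (I : Ideal A) (hI : I ≠ ⊥) :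
    have := reesM_prime I
    ¬ NoChain (Localization.AtPrime (reesM I)) := by
  intro _
  let φ : reesAlgebra I →+* A := (constantCoeff (R := A)).comp (reesAlgebra I).val.toRingHom
  have hφ : ∀ r, φ r = (r : A[X]).coeff 0 := fun r => rfl
  have hs : Function.Surjective φ := fun a => ⟨algebraMap A _ a, by rw [hφ, rees_alg_coe, coeff_C_zero]⟩
  obtain ⟨Q, hQ, h1, h2⟩ := exists_mid hdim
  have hlt : ∀ P P' : Ideal A, P < P' → P.comap φ < P'.comap φ := by
    intro P P' h
    refine lt_of_le_of_ne (Ideal.comap_mono h.le) fun he => h.ne (Ideal.comap_injective_of_surjective φ hs he)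
  refine not_noChain_loc ⊥ (Ideal.comap φ ⊥) (Q.comap φ) (reesM I) Ideal.isPrime_bot 
    (Ideal.IsPrime.comap _) (Ideal.IsPrime.comap _) inferInstance ?_ (hlt _ _ h1) (hlt _ _ h2)
  obtain ⟨x, hxI, hx0⟩ := Submodule.exists_mem_ne_zero_of_ne_bot hI
  rw [bot_lt_iff_ne_bot]
  intro hb
  have : rt I 1 x (rt_one hxI) ∈ Ideal.comap φ ⊥ := by
    rw [Ideal.mem_comap, hφ]; simp [rt, coeff_monomial]
  rw [hb] at this
  have h2 := congrArg Subtype.val this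
  simp [rt] at h2
  exact hx0 h2

theorem red_dt {I : Ideal A} {a b : A} (ha : a ∈ I) (hb : b ∈ I) (N : ℕ)
    (hN : I ^ (N + 1) ≤ Ideal.span {a} * I ^ N ⊔ Ideal.span {b} * I ^ N) (p : Ideal (reesAlgebra I)) (hp : p.IsPrime)
    (hap : rt I 1 a (rt_one ha) ∈ p) (hbp : rt I 1 b (rt_one hb) ∈ p) (d : A) (hd : d ∈ I) :
    rt I 1 d (rt_one hd) ∈ p := by
  apply hp.mem_of_pow_mem (N + 1)
  have hdN := Ideal.pow_mem_pow hd (N + 1)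
  rw [← rt_pow _ _ hdN]
  obtain ⟨y, hy, z, hz, hyz⟩ := Submodule.mem_sup.1 (hN hdN)
  obtain ⟨y', hy', rfl⟩ := Ideal.mem_span_singleton_mul.1 hy
  obtain ⟨z', hz', rfl⟩ := Ideal.mem_span_singleton_mul.1 hz
  have e : rt I (N + 1) (d ^ (N + 1)) hdN = rt I 1 a (rt_one ha) * rt I N y' hy' + rt I 1 b (rt_one hb) * rt I N z' hz' := by
    apply Subtype.ext
    simp [rt, monomial_mul_monomial, ← hyz, add_comm 1 N]
  rw [e]
  exact p.add_mem (p.mul_mem_right _ hap) (p.mul_mem_right _ hbp)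

theorem cm_red [IsIntegrallyClosed A] (hdim : ringKrullDim A = 2) {I : Ideal A} (hI : Prim I)
    (hIm : I ≤ IsLocalRing.maximalIdeal A)
    (hCM : IsCohenMacaulayRing (reesAlgebra I)) {a b : A} (ha : a ∈ I) (hb : b ∈ I) (ha0 : a ≠ 0) 
    (hJR : JR I I a b) (hb0 : ∀ n w, b * w ∈ I ^ (n + 1) → w ∈ I ^ n) :
    I ^ 2 ≤ Ideal.span {a} * I ⊔ Ideal.span {b} := by
  intro z hz
  by_contra hcon
  have hprim := hJR.prim hI hI
  have hab := regA hdim ha0 hprim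
  obtain ⟨N, hN⟩ : ∃ N, I ^ (N + 1) ≤ Ideal.span {a} * I ^ N ⊔ Ideal.span {b} * I ^ N := by
    obtain ⟨M, hM⟩ := hJR
    refine ⟨2 * M + 1, le_of_eq_of_le ?_ (hM.trans_eq ?_)⟩
    · rw [← sq, ← pow_mul]; rfl
    · rw [← sq, ← pow_mul, Ideal.sup_mul, mul_assoc, mul_assoc, ← pow_succ']
  have hMp := reesM_prime I
  have hcm := hCM.2 (reesM I) hMp
  have hdom : IsDomain (Localization.AtPrime (reesM I)) := IsLocalization.isDomain_localization 
    (Ideal.primeCompl_le_nonZeroDivisors _)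
  have hnoeth : IsNoetherianRing (Localization.AtPrime (reesM I)) := hcm.1
  obtain ⟨u, v, w, hu, hv, hw, hu0, hv', hw'⟩ := cm_three hcm (rees_not_noChain hdim I (hI.ne_bot hdim))
  set x : reesAlgebra I := algebraMap A _ a with hx
  set y : reesAlgebra I := rt I 1 b (rt_one hb) with hy
  have hreg := (rees_reg ha0 hb hab hb0).loc (reesM I).primeCompl (Localization.AtPrime (reesM I))
  have hx0 : algebraMap _ (Localization.AtPrime (reesM I)) x ≠ 0 := by
    intro h
    exact alg_ne_zero ha0 ((IsLocalization.to_map_eq_zero_iff (Localization.AtPrime (reesM I)) 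
      (Ideal.primeCompl_le_nonZeroDivisors (reesM I))).1 h)
  have hxM : x ∈ reesM I := by rw [mem_reesM, hx, rees_alg_coe, coeff_C_zero]; exact hIm ha
  have hyM : y ∈ reesM I := by rw [mem_reesM, hy]; simp [rt, coeff_monomial]
  rw [Ideal.map_span, Set.image_singleton] at hreg
  refine depth_three hu hv hw ((IsLocalization.AtPrime.to_map_mem_maximal_iff (Localization.AtPrime (reesM I)) (reesM I) x).2 hxM)
    ((IsLocalization.AtPrime.to_map_mem_maximal_iff (Localization.AtPrime (reesM I)) (reesM I) y).2 hyM) hu0 hx0 hv' hw' hreg ?_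
  have hi : Ideal.span {algebraMap _ (Localization.AtPrime (reesM I)) x} ⊔ Ideal.span {algebraMap _ (Localization.AtPrime (reesM I)) y} =
      (Ideal.span {x} ⊔ Ideal.span {y}).map (algebraMap _ (Localization.AtPrime (reesM I))) := by
    rw [Ideal.map_sup, Ideal.map_span, Ideal.map_span, Set.image_singleton, Set.image_singleton]
  rw [hi]
  have hzI : z ∈ I := Ideal.pow_le_self two_ne_zero hz
  set e := rt I 1 z (rt_one hzI) with he
  have hne : algebraMap _ (Localization.AtPrime (reesM I)) e ∉ (Ideal.span {x} ⊔ Ideal.span {y}).map (algebraMap _ (Localization.AtPrime (reesM I))) := by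
    rw [IsLocalization.algebraMap_mem_map_algebraMap_iff (reesM I).primeCompl]
    rintro ⟨s, hs, hse⟩
    obtain ⟨p, hp, q, hq, hpq⟩ := Submodule.mem_sup.1 hse
    obtain ⟨p, rfl⟩ := Ideal.mem_span_singleton'.1 hp
    obtain ⟨q, rfl⟩ := Ideal.mem_span_singleton'.1 hq
    have h1 := congrArg (fun z : reesAlgebra I => (z : A[X]).coeff 1) hpq
    simp only [mul_comm p x, mul_comm q y, mul_comm s e] at h1
    simp only [hx, hy, he] at h1
    rw [Subalgebra.coe_add, coeff_add, coeff_alg_mul] at h1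
    have c1 := coeff_rt_mul (rt_one hb) q 0
    have c2 := coeff_rt_mul (rt_one hzI) s 0
    rw [zero_add] at c1 c2
    rw [c1, c2] at h1
    have hunit : IsUnit ((s : A[X]).coeff 0) := by
      by_contra h; exact hs h
    apply hcon
    rw [← Ideal.mul_unit_mem_iff_mem _ hunit, ← h1]
    exact Submodule.add_mem_sup (Ideal.mul_mem_mul (Ideal.mem_span_singleton_self _) 
      (by simpa using rees_coeff_mem p 1)) (Ideal.mul_mem_right _ _ (Ideal.mem_span_singleton_self _))
  obtain ⟨P, hP, hPe⟩ := colon_exists (R := Localization.AtPrime (reesM I))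
    ((Ideal.span {x} ⊔ Ideal.span {y}).map (algebraMap _ (Localization.AtPrime (reesM I))))
    (algebraMap _ (Localization.AtPrime (reesM I)) e) hne
  suffices h : P = IsLocalRing.maximalIdeal (Localization.AtPrime (reesM I)) by rwa [h] at hP
  refine le_antisymm (IsLocalRing.le_maximalIdeal hP.1.ne_top) ?_
  rw [← Localization.AtPrime.map_eq_maximalIdeal, Ideal.map_le_iff_le_comap]
  set p := P.comap (algebraMap (reesAlgebra I) (Localization.AtPrime (reesM I))) with hp
  have hpp : p.IsPrime := hP.1.comap _
  have hpe : ∀ s, s * e ∈ Ideal.span {x} ⊔ Ideal.span {y} → s ∈ p := by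
    intro s hs
    rw [hp, Ideal.mem_comap]
    apply hPe
    rw [← map_mul]
    exact Ideal.mem_map_of_mem _ hs
  have hax : x ∈ p := hpe _ (Ideal.mem_sup_left (Ideal.mul_mem_right _ _ (Ideal.mem_span_singleton_self _)))
  have hby : y ∈ p := hpe _ (Ideal.mem_sup_right (Ideal.mul_mem_right _ _ (Ideal.mem_span_singleton_self _)))
  have hbx : algebraMap A _ b ∈ p := by
    apply hpe
    have : algebraMap A _ b * e = y * algebraMap A _ z := by
      apply Subtype.ext; simp [hy, he, rt, C_mul_monomial, monomial_mul_C]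
    rw [this]
    exact (Ideal.mem_sup_right (Ideal.mul_mem_right _ _ (Ideal.mem_span_singleton_self _)))
  have hay : rt I 1 a (rt_one ha) ∈ p := by
    apply hpe
    have : rt I 1 a (rt_one ha) * e = x * rt I 2 z hz := by
      apply Subtype.ext; simp [hx, he, rt, C_mul_monomial, monomial_mul_monomial]
    rw [this]
    exact (Ideal.mem_sup_left (Ideal.mul_mem_right _ _ (Ideal.mem_span_singleton_self _)))
  intro r hr
  refine rees_mem_of p (red_dt ha hb N hN p hpp hay hby) r ?_
  rw [mem_reesM] at hr
  have := hprim.le_prime (hpp.comap (algebraMap A (reesAlgebra I))) (sup_le 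
    ((Ideal.span_singleton_le_iff_mem _).2 hax) ((Ideal.span_singleton_le_iff_mem _).2 hbx))
  exact this hr

theorem cm_red2 [IsIntegrallyClosed A] (hdim : ringKrullDim A = 2) {I : Ideal A} (hI : Prim I)
    (hIm : I ≤ IsLocalRing.maximalIdeal A)
    (hCM : IsCohenMacaulayRing (reesAlgebra I)) {a b : A} (ha : a ∈ I) (hb : b ∈ I) (ha0 : a ≠ 0) (hb1 : b ≠ 0)
    (hJR : JR I I a b) (hb0 : ∀ n w, b * w ∈ I ^ (n + 1) → w ∈ I ^ n)
    (haa : ∀ n w, a * w ∈ I ^ (n + 1) → w ∈ I ^ n) :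
    I ^ 2 ≤ Ideal.span {a} * I ⊔ Ideal.span {b} * I := by
  intro z hz
  have hJR' : JR I I b a := by
    obtain ⟨M, hM⟩ := hJR
    exact ⟨M, by rwa [sup_comm]⟩
  have hab := regA hdim ha0 (hJR.prim hI hI)
  have h1 := cm_red hdim hI hIm hCM ha hb ha0 hJR hb0 hz
  have h2 := cm_red hdim hI hIm hCM hb ha hb1 hJR' haa hz
  obtain ⟨_, hy, _, hw, h1⟩ := Submodule.mem_sup.1 h1
  obtain ⟨i, hi, rfl⟩ := Ideal.mem_span_singleton_mul.1 hy
  obtain ⟨w, rfl⟩ := Ideal.mem_span_singleton'.1 hw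
  obtain ⟨_, hy, _, hw, h2⟩ := Submodule.mem_sup.1 h2
  obtain ⟨i', hi', rfl⟩ := Ideal.mem_span_singleton_mul.1 hy
  obtain ⟨w', rfl⟩ := Ideal.mem_span_singleton'.1 hw
  obtain ⟨v, hv⟩ := Ideal.mem_span_singleton'.1
    (hab (i' - w) (Ideal.mem_span_singleton'.2 ⟨i - w', by linear_combination h1 - h2⟩))
  have : z = a * (i - b * v) + b * i' := by
    linear_combination -h1 + b * hv
  rw [this]
  exact Submodule.add_mem_sup (Ideal.mul_mem_mul (Ideal.mem_span_singleton_self _) 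
    (I.sub_mem hi (I.mul_mem_right _ hb))) (Ideal.mul_mem_mul (Ideal.mem_span_singleton_self _) hi')
end A

end Part8

section Part9

open Polynomial RingTheory.Sequence
set_option linter.unusedSectionVars false

theorem S1 {B : Type*} [CommRing B] [IsDomain B] [IsNoetherianRing B] [IsIntegrallyClosed B] (J : Ideal B)
    (f b : B) (hbJ : b ∈ J) (hb : b ≠ 0) (M : ℕ)
    (h : J ^ (M + 1) ≤ Ideal.span {f} * J ^ (M + 1) ⊔ Ideal.span {b} * J ^ M) :
    ∃ u, u - 1 ∈ Ideal.span {f} ∧ ∀ j ∈ J, b ∣ u * j := by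
  obtain ⟨u, hu, hu'⟩ := Submodule.exists_sub_one_mem_and_smul_le_of_fg_of_le_sup (I := Ideal.span {f})
    (N := Ideal.span {b} * J ^ M) (N' := J ^ (M + 1)) (P := J ^ (M + 1)) (IsNoetherian.noetherian _) le_rfl
    (by rw [sup_comm, smul_eq_mul]; exact h)
  refine ⟨u, hu, fun j hj => dvd_of_stable (J ^ M) ?_ _ _ hb ?_⟩
  · intro h0
    have := Ideal.pow_mem_pow hbJ M
    rw [h0] at this
    exact pow_ne_zero M hb this
  · intro n hn
    have h1 : u * (j * n) ∈ Ideal.span {b} * J ^ M := by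
      apply hu'
      refine Submodule.smul_mem_pointwise_smul (j * n) u _ ?_
      rw [pow_succ']; exact Ideal.mul_mem_mul hj hn
    obtain ⟨n', hn', e⟩ := Ideal.mem_span_singleton_mul.1 h1
    exact ⟨n', hn', by rw [e]; ring⟩

theorem S2a {B : Type*} [CommRing B] (J : Ideal B) (u b : B) (h : ∀ j ∈ J, b ∣ u * j) (n : ℕ) :
    ∀ j ∈ J ^ n, b ^ n ∣ u ^ n * j := by
  induction n with
  | zero => intro j _; simp
  | succ n ih =>
    intro j hj
    rw [pow_succ] at hj
    refine Submodule.mul_induction_on hj ?_ ?_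
    · intro x hx y hy
      have := mul_dvd_mul (ih x hx) (h y hy)
      convert this using 1 <;> ring
    · intro x y hx hy
      rw [mul_add]; exact dvd_add hx hy

theorem S2 {B : Type*} [CommRing B] (J : Ideal B) (f u0 b : B) (hu0 : u0 - 1 ∈ Ideal.span {f})
    (h : ∀ j ∈ J, b ∣ u0 * j) (n : ℕ) :
    ∃ u, u - 1 ∈ Ideal.span {f ^ n} ∧ ∀ j ∈ J ^ n, b ^ n ∣ u * j := by
  rcases Nat.eq_zero_or_pos n with rfl | hn
  · exact ⟨1, by simp, by simp⟩
  have h1 : u0 ∣ 1 - (1 - u0) ^ n := by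
    have := sub_dvd_pow_sub_pow (1 : B) (1 - u0) n
    simpa using this
  have h2 : f ^ n ∣ (1 - u0) ^ n := by
    apply pow_dvd_pow_of_dvd
    obtain ⟨c, hc⟩ := Ideal.mem_span_singleton'.1 hu0
    exact ⟨-c, by linear_combination hc⟩
  refine ⟨(1 - (1 - u0) ^ n) ^ n, ?_, ?_⟩
  · rw [Ideal.mem_span_singleton]
    have := sub_dvd_pow_sub_pow (1 - (1 - u0) ^ n) (1 : B) n
    rw [one_pow] at this
    refine (h2.trans ?_).trans this
    exact ⟨-1, by ring⟩
  · intro j hj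
    refine (S2a J u0 b h n j hj).trans (mul_dvd_mul_right (pow_dvd_pow_of_dvd h1 n) j)

theorem S3 {B : Type*} [CommRing B] [IsDomain B] [IsIntegrallyClosed B] (x y : B) (hx : x ≠ 0) (m : ℕ) (hm : 0 < m)
    (c : ℕ → B) (hc : ∀ i, 1 ≤ i → i ≤ m → x ^ i ∣ c i)
    (h : y ^ m + ∑ i ∈ Finset.Icc 1 m, c i * y ^ (m - i) = 0) : x ∣ y := by
  choose! d hd using hc
  have hx' : algebraMap B (FractionRing B) x ≠ 0 := by simpa using hx
  have hInt : IsIntegral B (algebraMap B (FractionRing B) y / algebraMap B (FractionRing B) x) := by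
    refine ⟨X ^ m + ∑ i ∈ Finset.Icc 1 m, C (d i) * X ^ (m - i), ?_, ?_⟩
    · apply monic_X_pow_add
      rw [Polynomial.degree_lt_iff_coeff_zero]
      intro k hk
      rw [finsetSum_coeff]
      refine Finset.sum_eq_zero fun i hi => ?_
      have := Finset.mem_Icc.1 hi
      rw [coeff_C_mul, coeff_X_pow, if_neg (by omega), mul_zero]
    · rw [eval₂_add, eval₂_pow, eval₂_X, eval₂_finsetSum]
      have h2 := congrArg (algebraMap B (FractionRing B)) h
      simp only [map_add, map_pow, map_sum, map_mul, map_zero] at h2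
      have h3 : ((algebraMap B (FractionRing B) x) ^ m) * ((algebraMap B (FractionRing B) y / algebraMap B (FractionRing B) x) ^ m +
        ∑ i ∈ Finset.Icc 1 m, eval₂ (algebraMap B (FractionRing B))
          (algebraMap B (FractionRing B) y / algebraMap B (FractionRing B) x) (C (d i) * X ^ (m - i))) = 0 := by
        rw [← h2, mul_add, Finset.mul_sum]
        congr 1
        · rw [div_pow]; field_simp
        · refine Finset.sum_congr rfl fun i hi => ?_
          have hi' := Finset.mem_Icc.1 hi
          rw [hd i hi'.1 hi'.2]
          simp only [eval₂_mul, eval₂_C, eval₂_pow, eval₂_X, map_mul, map_pow]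
          obtain ⟨k, rfl⟩ := Nat.exists_eq_add_of_le hi'.2
          rw [Nat.add_sub_cancel_left, div_pow, pow_add]
          field_simp
      exact (mul_eq_zero.1 h3).resolve_left (pow_ne_zero _ hx')
  obtain ⟨q, hq⟩ := IsIntegrallyClosed.isIntegral_iff.1 hInt
  refine ⟨q, IsFractionRing.injective B (FractionRing B) ?_⟩
  rw [map_mul, hq]; field_simp

theorem core {A B : Type*} [CommRing A] [CommRing B] [IsDomain B] [IsNoetherianRing B] [IsIntegrallyClosed B]
    (ψ : A →+* B) (I J : Ideal A) (α f : B) (hI : I.map ψ = Ideal.span {α}) (hα : α ≠ 0) (a b : A)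
    (hf : ψ a = f * α) (hbJ : b ∈ J) (hb : ψ b ≠ 0) (hJR : JR I J a b) (n : ℕ) :
    ∃ u, u - 1 ∈ Ideal.span {f ^ n} ∧ (∀ j ∈ J ^ n, ψ b ^ n ∣ u * ψ j) ∧
      ∀ z, IsIntegralOverIdeal (I ^ n * J ^ n) z → α ^ n * ψ b ^ n ∣ u * ψ z := by
  obtain ⟨M, hM⟩ := hJR
  set J' := J.map ψ with hJ'
  have h1 := Ideal.map_mono (f := ψ) hM
  simp only [Ideal.map_mul, Ideal.map_pow, Ideal.map_sup, Ideal.map_span, Set.image_singleton, hI, hf, ← hJ'] at h1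
  have h2 : J' ^ (M + 1) ≤ Ideal.span {f} * J' ^ (M + 1) ⊔ Ideal.span {ψ b} * J' ^ M := by
    rw [← Ideal.span_singleton_mul_right_mono (pow_ne_zero (M + 1) hα)]
    refine le_of_eq_of_le ?_ (h1.trans_eq ?_)
    · rw [mul_pow, Ideal.span_singleton_pow]
    · rw [← Ideal.span_singleton_mul_span_singleton, ← Ideal.span_singleton_pow, ← Ideal.add_eq_sup, ← Ideal.add_eq_sup]
      ring
  obtain ⟨u0, hu0, hu0'⟩ := S1 J' f (ψ b) (Ideal.mem_map_of_mem _ hbJ) hb M h2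
  obtain ⟨u, hu, hu'⟩ := S2 J' f u0 (ψ b) hu0 hu0' n
  refine ⟨u, hu, fun j hj => hu' _ ?_, ?_⟩
  · rw [hJ', ← Ideal.map_pow]; exact Ideal.mem_map_of_mem _ hj
  rintro z ⟨m, hm, c, hc, hz⟩
  refine S3 _ _ (mul_ne_zero (pow_ne_zero _ hα) (pow_ne_zero _ hb)) m hm (fun i => u ^ i * ψ (c i)) ?_ ?_
  · intro i hi him
    have h3 := Ideal.mem_map_of_mem ψ (hc i hi him)
    rw [Ideal.map_pow, Ideal.map_mul, Ideal.map_pow, Ideal.map_pow, hI, mul_pow, Ideal.span_singleton_pow,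
      Ideal.span_singleton_pow] at h3
    obtain ⟨q, hq, e⟩ := Ideal.mem_span_singleton_mul.1 h3
    rw [← e, mul_pow]
    have := mul_dvd_mul_left ((α ^ n) ^ i) (S2a (J' ^ n) u (ψ b ^ n) hu' i q hq)
    convert this using 1
    ring
  · have h4 := congrArg (fun t => u ^ m * ψ t) hz
    simp only [map_add, map_pow, map_sum, map_mul, map_zero, mul_zero] at h4
    rw [← h4, mul_add, Finset.mul_sum, mul_pow]
    congr 1
    refine Finset.sum_congr rfl fun i hi => ?_
    obtain ⟨k, rfl⟩ := Nat.exists_eq_add_of_le (Finset.mem_Icc.1 hi).2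
    rw [Nat.add_sub_cancel_left]; ring

end Part9

section Part10

open Polynomial RingTheory.Sequence
set_option linter.unusedSectionVars false

theorem JR.symm {A : Type*} [CommRing A] {I J : Ideal A} {a b : A} (h : JR I J a b) : JR J I b a := by
  obtain ⟨M, hM⟩ := h
  exact ⟨M, by rwa [sup_comm, mul_comm J I]⟩

theorem self_int {A : Type*} [CommRing A] {I : Ideal A} {z : A} (h : z ∈ I) : IsIntegralOverIdeal I z :=
  ⟨1, one_pos, fun _ => -z, fun i h1 h2 => by
    obtain rfl : i = 1 := le_antisymm h2 h1
    simpa using h, by simp⟩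

theorem S5 {A : Type*} [CommRing A] {I : Ideal A} {a a' : A} (ha : a ∈ I)
    (h : I ^ 2 ≤ Ideal.span {a} * I ⊔ Ideal.span {a'} * I) (n : ℕ) : ∀ N,
    I ^ (N + n) ≤ Ideal.span {a' ^ N} * I ^ n ⊔ Ideal.span {a ^ n} := by
  induction n with
  | zero => intro N; simp
  | succ n ih =>
    intro N
    induction N with
    | zero => simp
    | succ N ihN =>
      have e : I ^ (N + 1 + (n + 1)) = I ^ 2 * I ^ (N + n) := by rw [← pow_add]; congr 1; ring
      rw [e]
      refine (Ideal.mul_mono_left h).trans ?_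
      rw [Ideal.sup_mul, mul_assoc, mul_assoc, ← pow_succ', sup_comm]
      refine sup_le ?_ ?_
      · refine (Ideal.mul_mono_right ihN).trans ?_
        rw [Ideal.mul_sup]
        refine sup_le_sup ?_ Ideal.mul_le_right
        rw [← mul_assoc, Ideal.span_singleton_mul_span_singleton, ← pow_succ']
      · have h2 := ih (N + 1)
        rw [show N + 1 + n = N + n + 1 by ring] at h2
        refine (Ideal.mul_mono_right h2).trans ?_
        rw [Ideal.mul_sup]
        refine sup_le_sup ?_ ?_
        · rw [mul_left_comm, pow_succ' I]
          exact Ideal.mul_mono_right (Ideal.mul_mono_left ((Ideal.span_singleton_le_iff_mem _).2 ha))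
        · rw [Ideal.span_singleton_mul_span_singleton, ← pow_succ']

section A
variable {A : Type*} [CommRing A] [IsDomain A] [IsNoetherianRing A] 
  (F : Type*) [Field F] [Algebra A F] [IsFractionRing A F]

theorem chart_IC {I : Ideal A} {a : A} (haI : a ∈ I) (ha : a ≠ 0)
    (hI : IsIntegrallyClosed (reesAlgebra I)) : IsIntegrallyClosed (chart F I a) := by
  have := isFractionRing_sub (A := A) (chart F I a) (fun x => algebraMap_mem_chart x)
  rw [isIntegrallyClosed_iff F]
  intro x hx
  exact ⟨⟨x, chart_intClosed haI ha hI hx⟩, rfl⟩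

/-- the core lemma in a chart, in terms of elements of the fraction field -/
theorem coreF {I J : Ideal A} {a a' b : A} (haI : a ∈ I) (haI' : a' ∈ I) (ha' : a' ≠ 0) (hbJ : b ∈ J) (hb : b ≠ 0)
    (hI : IsIntegrallyClosed (reesAlgebra I)) (hJR : JR I J a b) (n : ℕ) :
    ∃ g ∈ chart F I a', ∃ u ∈ chart F I a', u = 1 + g * (algebraMap A F a / algebraMap A F a') ^ n ∧
      (∀ j ∈ J ^ n, ∃ q ∈ chart F I a', u * algebraMap A F j = algebraMap A F b ^ n * q) ∧
      ∀ z, IsIntegralOverIdeal (I ^ n * J ^ n) z → ∃ q ∈ chart F I a',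
        u * algebraMap A F z = algebraMap A F a' ^ n * algebraMap A F b ^ n * q := by
  have := chart_IC F haI' ha' hI
  have := chart_noeth (F := F) I a'
  let ψ : A →+* chart F I a' := (algebraMap A F).codRestrict _ (fun x => algebraMap_mem_chart x)
  have hψ : ∀ x, ((ψ x : chart F I a') : F) = algebraMap A F x := fun x => rfl
  have hψ0 : ∀ x, x ≠ 0 → ψ x ≠ 0 := by
    intro x hx h
    have := congrArg Subtype.val h
    exact ia_ne (F := F) hx this
  have ha'F := ia_ne (F := F) ha'
  have hmap : I.map ψ = Ideal.span {ψ a'} := by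
    apply le_antisymm
    · rw [Ideal.map_le_iff_le_comap]
      intro x hx
      rw [Ideal.mem_comap, Ideal.mem_span_singleton']
      refine ⟨⟨_, div_mem_chart hx⟩, Subtype.ext ?_⟩
      change algebraMap A F x / algebraMap A F a' * algebraMap A F a' = algebraMap A F x
      field_simp
    · rw [Ideal.span_singleton_le_iff_mem]; exact Ideal.mem_map_of_mem _ haI'
  obtain ⟨u, hu, hu1, hu2⟩ := core ψ I J (ψ a') ⟨_, div_mem_chart haI⟩ hmap (hψ0 _ ha') a b (by
      apply Subtype.ext
      change algebraMap A F a = algebraMap A F a / algebraMap A F a' * algebraMap A F a'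
      field_simp) hbJ (hψ0 _ hb) hJR n
  obtain ⟨g, hg⟩ := Ideal.mem_span_singleton'.1 hu
  refine ⟨g, g.2, u, u.2, ?_, ?_, ?_⟩
  · have := congrArg Subtype.val hg
    simp only [Subring.coe_mul, Subring.coe_pow] at this
    rw [this]
    change (u : F) = 1 + ((u : F) - 1)
    ring
  · intro j hj
    obtain ⟨q, hq⟩ := hu1 j hj
    exact ⟨q, q.2, by simpa [hψ] using congrArg Subtype.val hq⟩
  · intro z hz
    obtain ⟨q, hq⟩ := hu2 z hz
    exact ⟨q, q.2, by simpa [hψ] using congrArg Subtype.val hq⟩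

theorem trF {I : Ideal A} {a a' : A} (haI : a ∈ I) (haI' : a' ∈ I) (ha' : a' ≠ 0) (n : ℕ) {g q u : F} {b0 z : A}
    (hg : g ∈ chart F I a') (hq : q ∈ chart F I a')
    (hu : u = 1 + g * (algebraMap A F a / algebraMap A F a') ^ n)
    (h : u * algebraMap A F z = algebraMap A F a' ^ n * algebraMap A F b0 * q) :
    ∃ N, ∃ y ∈ I ^ (N + n), ∃ w, a' ^ N * z = b0 * y + a ^ n * w := by
  have ha'F := ia_ne (F := F) ha'
  obtain ⟨N1, y1, hy1, e1⟩ := (mem_chart haI' ha' _).1 hg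
  obtain ⟨N2, y2, hy2, e2⟩ := (mem_chart haI' ha' _).1 hq
  refine ⟨N1 + n + N2, a' ^ (N1 + 2 * n) * y2, ?_, - (y1 * a' ^ N2 * z), ?_⟩
  · have : N1 + n + N2 + n = (N1 + 2 * n) + N2 := by ring
    rw [this, pow_add]
    exact Ideal.mul_mem_mul (Ideal.pow_mem_pow haI' _) hy2
  · apply IsFractionRing.injective A F
    simp only [map_mul, map_add, map_pow, map_neg]
    rw [← e1, ← e2]
    rw [hu] at h
    have h' : algebraMap A F z = algebraMap A F a' ^ n * algebraMap A F b0 * q - 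
      g * (algebraMap A F a / algebraMap A F a') ^ n * algebraMap A F z := by rw [← h]; ring
    have h'' : algebraMap A F a' ^ n * algebraMap A F z = algebraMap A F a' ^ n * algebraMap A F a' ^ n * algebraMap A F b0 * q - 
      g * algebraMap A F a ^ n * algebraMap A F z := by
      calc _ = algebraMap A F a' ^ n * (algebraMap A F a' ^ n * algebraMap A F b0 * q - 
        g * (algebraMap A F a / algebraMap A F a') ^ n * algebraMap A F z) := by rw [← h']
        _ = _ := by rw [div_pow]; field_simp
    calc _ = algebraMap A F a' ^ (N1 + N2) * (algebraMap A F a' ^ n * algebraMap A F z) := by ring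
      _ = _ := by rw [h'']; ring
end A

theorem mainL {A : Type*} [CommRing A] [IsDomain A] [IsNoetherianRing A] [IsLocalRing A] [IsIntegrallyClosed A]
    (hdim : ringKrullDim A = 2) {I J : Ideal A} {a a' b b' : A} (ha : a ∈ I) (ha' : a' ∈ I) (hb : b ∈ J) (hb' : b' ∈ J)
    (ha0 : a ≠ 0) (ha'0 : a' ≠ 0) (hb0 : b ≠ 0) (hb'0 : b' ≠ 0)
    (hI : IsIntegrallyClosed (reesAlgebra I)) (hJ : IsIntegrallyClosed (reesAlgebra J))
    (hJR : JR I J a b) (hpa : Prim (Ideal.span {a} ⊔ Ideal.span {a'})) (hpb : Prim (Ideal.span {b} ⊔ Ideal.span {b'}))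
    (hI2 : I ^ 2 ≤ Ideal.span {a} * I ⊔ Ideal.span {a'} * I) (hJ2 : J ^ 2 ≤ Ideal.span {b} * J ⊔ Ideal.span {b'} * J)
    (n : ℕ) (z : A) (hz : IsIntegralOverIdeal (I ^ n * J ^ n) z) :
    z ∈ Ideal.span {a ^ n} * J ^ n ⊔ Ideal.span {b ^ n} * I ^ n := by
  obtain ⟨i, hi, w, e⟩ : ∃ i ∈ I ^ n, ∃ w, z = b ^ n * i + a ^ n * w := by
    obtain ⟨g, hg, u, hu, hug, -, hu2⟩ := coreF (FractionRing A) ha ha' ha'0 hb hb0 hI hJR n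
    obtain ⟨q, hq, e⟩ := hu2 z hz
    rw [← map_pow _ b] at e
    obtain ⟨N, y, hy, w, e⟩ := trF (FractionRing A) ha ha' ha'0 n hg hq hug e
    obtain ⟨_, hp, _, hr, e2⟩ := Submodule.mem_sup.1 (S5 ha hI2 n N hy)
    obtain ⟨i, hi, rfl⟩ := Ideal.mem_span_singleton_mul.1 hp
    obtain ⟨v, rfl⟩ := Ideal.mem_span_singleton'.1 hr
    obtain ⟨t, ht⟩ := Ideal.mem_span_singleton'.1
      (regA_pow hdim ha0 hpa n N (z - b ^ n * i) (Ideal.mem_span_singleton'.2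
        ⟨b ^ n * v + w, by linear_combination -e + b ^ n * e2⟩))
    exact ⟨i, hi, t, by linear_combination -ht⟩
  have hw : w ∈ J ^ n := by
    obtain ⟨g, hg, u, hu, hug, hu1, hu2⟩ := coreF (FractionRing A) hb hb' hb'0 ha ha0 hJ hJR.symm n
    obtain ⟨q, hq, e1⟩ := hu2 z (by rwa [mul_comm])
    obtain ⟨q', hq', e2⟩ := hu1 i hi
    have hbF := ia_ne (F := FractionRing A) hb'0
    have haF := ia_ne (F := FractionRing A) ha0
    have hf : algebraMap A (FractionRing A) b / algebraMap A (FractionRing A) b' ∈ chart (FractionRing A) J b' :=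
      div_mem_chart hb
    have e3 : u * algebraMap A (FractionRing A) w = algebraMap A _ b' ^ n * algebraMap A _ 1 *
        (q - (algebraMap A (FractionRing A) b / algebraMap A (FractionRing A) b') ^ n * q') := by
      apply mul_left_cancel₀ (pow_ne_zero n haF)
      have e4 : algebraMap A (FractionRing A) z = algebraMap A _ b ^ n * algebraMap A _ i + algebraMap A _ a ^ n * algebraMap A _ w := by
        rw [e]; simp
      rw [e4] at e1
      have e5 : algebraMap A (FractionRing A) b ^ n = algebraMap A _ b' ^ n *
        (algebraMap A (FractionRing A) b / algebraMap A (FractionRing A) b') ^ n := by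
        rw [div_pow]; field_simp
      rw [map_one]
      linear_combination e1 - algebraMap A _ b ^ n * e2 - algebraMap A _ a ^ n * q' * e5
    obtain ⟨N, y, hy, w', e6⟩ := trF (FractionRing A) hb hb' hb'0 n hg 
      (sub_mem hq (mul_mem (pow_mem hf n) hq')) hug e3
    obtain ⟨_, hp, _, hr, e7⟩ := Submodule.mem_sup.1 (S5 hb hJ2 n N hy)
    obtain ⟨j, hj, rfl⟩ := Ideal.mem_span_singleton_mul.1 hp
    obtain ⟨v, rfl⟩ := Ideal.mem_span_singleton'.1 hr
    obtain ⟨t, ht⟩ := Ideal.mem_span_singleton'.1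
      (regA_pow hdim hb0 hpb n N (w - j) (Ideal.mem_span_singleton'.2
        ⟨v + w', by linear_combination -e6 + e7⟩))
    have : w = j + t * b ^ n := by linear_combination -ht
    rw [this]
    exact Ideal.add_mem _ hj (Ideal.mul_mem_left _ _ (Ideal.pow_mem_pow hb n))
  rw [e, add_comm]
  exact Submodule.add_mem_sup (Ideal.mul_mem_mul (Ideal.mem_span_singleton_self _) hw)
    (Ideal.mul_mem_mul (Ideal.mem_span_singleton_self _) hi)

end Part10

section Part11

open Polynomial RingTheory.Sequence
set_option linter.unusedSectionVars false

theorem rees_clear {A : Type*} [CommRing A] {K : Ideal A} {x : A} (hx : x ∈ K) (s : A[X]) (N : ℕ)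
    (hN : s.natDegree ≤ N) : C (x ^ N) * s ∈ reesAlgebra K := by
  rw [mem_reesAlgebra_iff]
  intro i
  rw [coeff_C_mul]
  by_cases hi : i ≤ N
  · exact Ideal.mul_mem_right _ _ (Ideal.pow_le_pow_right hi (Ideal.pow_mem_pow hx N))
  · rw [coeff_eq_zero_of_natDegree_lt (by omega), mul_zero]; exact zero_mem _

theorem rees_normal {A : Type*} [CommRing A] [IsDomain A] [IsNoetherianRing A] [IsIntegrallyClosed A]
    (K : Ideal A) (hK : K ≠ ⊥) (h : ∀ n z, IsIntegralOverIdeal (K ^ n) z → z ∈ K ^ n) :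
    IsIntegrallyClosed (reesAlgebra K) := by
  obtain ⟨x, hxK, hx0⟩ := Submodule.exists_mem_ne_zero_of_ne_bot hK
  have hal : ∀ s : A[X], IsIntegral (reesAlgebra K) s → IsAlmostIntegral (reesAlgebra K) s := by
    intro s hs
    refine hs.isAlmostIntegral_of_exists_smul_mem_range ⟨algebraMap A _ (x ^ s.natDegree), ?_, ?_⟩
    · refine mem_nonZeroDivisors_of_ne_zero fun h0 => ?_
      have := congrArg Subtype.val h0
      rw [rees_alg_coe] at this
      exact pow_ne_zero _ hx0 (by simpa using this)
    · exact ⟨⟨_, rees_clear hxK s _ le_rfl⟩, rfl⟩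
  have hlead : ∀ s : A[X], IsIntegral (reesAlgebra K) s → s.leadingCoeff ∈ K ^ s.natDegree := by
    intro s hs
    obtain ⟨r, hr, hr'⟩ := hal s hs
    have hr0 : (r : A[X]) ≠ 0 := fun h0 => nonZeroDivisors.ne_zero hr (Subtype.ext h0)
    set d := s.natDegree with hd
    set σ := s.leadingCoeff with hσ
    have hInt : IsIntegral (reesAlgebra K) (monomial d σ) := by
      apply IsAlmostIntegral.isIntegral
      refine ⟨rt K (r : A[X]).natDegree _ (rees_coeff_mem r _), mem_nonZeroDivisors_of_ne_zero fun h0 => ?_, fun n => ?_⟩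
      · have := congrArg Subtype.val h0
        simp [rt] at this
        exact nonZeroDivisors.ne_zero hr this
      · obtain ⟨t, ht⟩ := hr' n
        have ht' : (t : A[X]) = r * s ^ n := ht
        refine ⟨rt K ((r : A[X]).natDegree + d * n) ((r : A[X]).leadingCoeff * σ ^ n) ?_, ?_⟩
        · have := rees_coeff_mem t ((r : A[X]).natDegree + d * n)
          rw [ht'] at this
          have e : ((r : A[X]) * s ^ n).coeff ((r : A[X]).natDegree + d * n) = (r : A[X]).leadingCoeff * σ ^ n := by
            have e1 := coeff_mul_add_eq_of_natDegree_le (f := (r : A[X])) (g := s ^ n) (df := (r : A[X]).natDegree) (dg := d * n)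
              le_rfl (by rw [mul_comm]; exact natDegree_pow_le)
            rw [e1, mul_comm d n, coeff_pow_of_natDegree_le le_rfl]
            rfl
          rwa [e] at this
        · change monomial _ _ = monomial _ _ * _
          rw [monomial_pow, monomial_mul_monomial]
          rfl
    obtain ⟨p, hp, hpe⟩ := hInt
    apply h
    rcases Nat.eq_zero_or_pos p.natDegree with h0 | h0
    · exfalso
      rw [hp.natDegree_eq_zero.1 h0] at hpe
      simp at hpe
    refine ⟨p.natDegree, h0, fun i => ((p.coeff (p.natDegree - i) : reesAlgebra K) : A[X]).coeff (d * i), ?_, ?_⟩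
    · intro i _ _
      rw [← pow_mul]; exact rees_coeff_mem _ _
    · set m := p.natDegree with hm
      rw [eval₂_eq_sum_range, Finset.sum_range_succ, ← hm] at hpe
      have hpm : p.coeff m = 1 := hp.coeff_natDegree
      rw [hpm, map_one, one_mul] at hpe
      have h2 := congrArg (fun q => coeff q (d * m)) hpe
      simp only [coeff_add, finsetSum_coeff, coeff_zero, monomial_pow, coeff_monomial, if_true] at h2
      rw [add_comm] at h2
      rw [← h2]
      congr 1
      refine Finset.sum_bij' (fun i _ => m - i) (fun i _ => m - i) ?_ ?_ ?_ ?_ ?_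
      · intro i hi; have := Finset.mem_Icc.1 hi; exact Finset.mem_range.2 (by omega)
      · intro i hi; have := Finset.mem_range.1 hi; exact Finset.mem_Icc.2 (by omega)
      · intro i hi; have := Finset.mem_Icc.1 hi; omega
      · intro i hi; have := Finset.mem_range.1 hi; omega
      · intro i hi
        have hi' := Finset.mem_Icc.1 hi
        have e : d * m = d * i + d * (m - i) := by rw [← mul_add]; congr 1; omega
        rw [e, coeff_mul_monomial]
        rfl
  have hin : IsIntegrallyClosedIn (reesAlgebra K) A[X] := by
    rw [isIntegrallyClosedIn_iff]
    refine ⟨Subtype.val_injective, ?_⟩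
    have : ∀ n, ∀ s : A[X], s.natDegree < n → IsIntegral (reesAlgebra K) s → s ∈ reesAlgebra K := by
      intro n
      induction n with
      | zero => intro s hs; omega
      | succ n ih =>
        intro s hs hsi
        have h1 : monomial s.natDegree s.leadingCoeff ∈ reesAlgebra K := reesAlgebra.monomial_mem.2 (hlead s hsi)
        by_cases hd : s.natDegree = 0
        · rw [eq_C_of_natDegree_eq_zero hd]
          exact (algebraMap A (reesAlgebra K) _).2
        have h2 : s.eraseLead ∈ reesAlgebra K := by
          apply ih
          · have := eraseLead_natDegree_le s; omega
          · have : s.eraseLead = s - monomial s.natDegree s.leadingCoeff := by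
              rw [self_sub_monomial_natDegree_leadingCoeff]
            rw [this]
            refine hsi.sub ?_
            exact isIntegral_algebraMap (R := reesAlgebra K) (x := ⟨_, h1⟩)
        rw [← eraseLead_add_monomial_natDegree_leadingCoeff s]
        exact add_mem h2 h1
    intro s hs
    exact ⟨⟨s, this _ s (Nat.lt_succ_self _) hs⟩, rfl⟩
  exact IsIntegrallyClosed.of_isIntegrallyClosed_of_isIntegrallyClosedIn _ A[X]

end Part11

section Part12

open Polynomial RingTheory.Sequence
set_option linter.unusedSectionVars false

theorem lift_hom {R S T : Type*} [CommRing R] [CommRing S] [CommRing T] (ι : S →+* T) (hι : Function.Injective ι)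
    (θ : R →+* T) (h : ∀ r, ∃ s, ι s = θ r) : ∃ φ : R →+* S, ∀ r, ι (φ r) = θ r := by
  choose f hf using h
  exact ⟨{ toFun := f
           map_one' := hι (by rw [hf, map_one, map_one])
           map_zero' := hι (by rw [hf, map_zero, map_zero])
           map_mul' := fun x y => hι (by rw [hf, map_mul, map_mul, hf, hf])
           map_add' := fun x y => hι (by rw [hf, map_add, map_add, hf, hf]) }, hf⟩

section A
variable {A : Type*} [CommRing A] [IsDomain A] [IsNoetherianRing A] 

theorem colon_pow {K : Ideal A} {c d : A} (hc : c ∈ K) (hc0 : c ≠ 0)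
    (hcd : RegMod (Ideal.span {c}) d) (hK2 : K ^ 2 ≤ Ideal.span {c} * K ⊔ Ideal.span {d} * K) (n : ℕ) :
    ∀ w, d * w ∈ K ^ (n + 1) → w ∈ K ^ n := by
  induction n with
  | zero => intro w _; simp
  | succ n ih =>
    intro w hw
    have e : K ^ (n + 1 + 1) ≤ Ideal.span {c} * K ^ (n + 1) ⊔ Ideal.span {d} * K ^ (n + 1) := by
      calc K ^ (n + 1 + 1) = K ^ 2 * K ^ n := by rw [← pow_add]; congr 1; ring
        _ ≤ _ := Ideal.mul_mono_left hK2
        _ = _ := by rw [Ideal.sup_mul, mul_assoc, mul_assoc, ← pow_succ']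
    obtain ⟨_, hp1, _, hq1, e1⟩ := Submodule.mem_sup.1 (e hw)
    obtain ⟨p, hp, rfl⟩ := Ideal.mem_span_singleton_mul.1 hp1
    obtain ⟨q, hq, rfl⟩ := Ideal.mem_span_singleton_mul.1 hq1
    obtain ⟨v, hv⟩ := Ideal.mem_span_singleton'.1
      (hcd (w - q) (Ideal.mem_span_singleton'.2 ⟨p, by linear_combination e1⟩))
    have h2 : d * v = p := by
      apply mul_left_cancel₀ hc0
      linear_combination d * hv - e1
    have h3 := ih v (h2 ▸ hp)
    have : w = q + c * v := by linear_combination -hv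
    rw [this, pow_succ']
    rw [pow_succ'] at hq
    exact Ideal.add_mem _ hq (Ideal.mul_mem_mul hc h3)

theorem rees_reg3 {K : Ideal A} {c d : A} (hc : c ∈ K) (hd : d ∈ K) (hc0 : c ≠ 0) (hd0 : d ≠ 0)
    (hcd : RegMod (Ideal.span {c}) d) (hK2 : K ^ 2 ≤ Ideal.span {c} * K ⊔ Ideal.span {d} * K) :
    RegMod (Ideal.span {algebraMap A (reesAlgebra K) c} ⊔ Ideal.span {rt K 1 d (rt_one hd)})
      (algebraMap A (reesAlgebra K) d + rt K 1 c (rt_one hc)) := by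
  intro r hr
  obtain ⟨_, hp, _, hq, e⟩ := Submodule.mem_sup.1 hr
  obtain ⟨p, rfl⟩ := Ideal.mem_span_singleton'.1 hp
  obtain ⟨q, rfl⟩ := Ideal.mem_span_singleton'.1 hq
  rw [mul_comm p, mul_comm q, add_mul] at e
  refine rees_mem_of_terms _ _ fun n => ?_
  rcases n with _ | n
  · have h1 := congrArg (fun z : reesAlgebra K => (z : A[X]).coeff 0) e
    simp only [Subalgebra.coe_add, coeff_add, coeff_rt_mul_zero, coeff_alg_mul, add_zero] at h1
    obtain ⟨w, hw⟩ := Ideal.mem_span_singleton'.1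
      (hcd _ (Ideal.mem_span_singleton'.2 ⟨_, (mul_comm _ _).trans h1⟩))
    rw [rt_congr _ (hw.symm.trans (mul_comm _ _)), rt_alg_mul (by simp)]
    exact Ideal.mem_sup_left (Ideal.mul_mem_right _ _ (Ideal.mem_span_singleton_self _))
  · have h1 := congrArg (fun z : reesAlgebra K => (z : A[X]).coeff (n + 1 + 1)) e
    simp only [Subalgebra.coe_add, coeff_add, coeff_rt_mul, coeff_alg_mul] at h1
    have hp2 := rees_coeff_mem p (n + 1 + 1)
    have hr1 := rees_coeff_mem r (n + 1)
    set r1 := (r : A[X]).coeff (n + 1)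
    set r2 := (r : A[X]).coeff (n + 1 + 1)
    set p2 := (p : A[X]).coeff (n + 1 + 1)
    set q1 := (q : A[X]).coeff (n + 1)
    obtain ⟨v, hv⟩ := Ideal.mem_span_singleton'.1
      (hcd (q1 - r2) (Ideal.mem_span_singleton'.2 ⟨r1 - p2, by linear_combination -h1⟩))
    have h2 : r1 - p2 = d * v := by
      apply mul_left_cancel₀ hc0
      linear_combination -h1 - d * hv
    have h3 : v ∈ K ^ n := by
      apply colon_pow hc hc0 hcd hK2
      rw [← h2]
      exact Ideal.sub_mem _ hr1 (Ideal.pow_le_pow_right (Nat.le_succ _) hp2)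
    have e2 : K ^ (n + 1 + 1) ≤ Ideal.span {c} * K ^ (n + 1) ⊔ Ideal.span {d} * K ^ (n + 1) := by
      calc K ^ (n + 1 + 1) = K ^ 2 * K ^ n := by rw [← pow_add]; congr 1; ring
        _ ≤ _ := Ideal.mul_mono_left hK2
        _ = _ := by rw [Ideal.sup_mul, mul_assoc, mul_assoc, ← pow_succ']
    obtain ⟨_, hy1, _, hz1, e1⟩ := Submodule.mem_sup.1 (e2 hp2)
    obtain ⟨y, hy, rfl⟩ := Ideal.mem_span_singleton_mul.1 hy1
    obtain ⟨z, hz, rfl⟩ := Ideal.mem_span_singleton_mul.1 hz1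
    have hzn : z + v ∈ K ^ n := Ideal.add_mem _ (Ideal.pow_le_pow_right (Nat.le_succ _) hz) h3
    have : rt K (n + 1) r1 hr1 = algebraMap A _ c * rt K (n + 1) y hy + rt K 1 d (rt_one hd) * rt K n (z + v) hzn := by
      apply Subtype.ext
      have e3 : r1 = c * y + d * (z + v) := by linear_combination h2 - e1
      simp only [rt, Subalgebra.coe_add, Subalgebra.coe_mul, rees_alg_coe, C_mul_monomial, monomial_mul_monomial, 
        add_comm 1 n]
      rw [← map_add, ← e3]
    rw [this]
    exact Submodule.add_mem_sup (Ideal.mul_mem_right _ _ (Ideal.mem_span_singleton_self _))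
      (Ideal.mul_mem_right _ _ (Ideal.mem_span_singleton_self _))

theorem cm_case2 [IsIntegrallyClosed A] (F : Type*) [Field F] [Algebra A F] [IsFractionRing A F]
    (hdim : ringKrullDim A ≤ 2) (K : Ideal A) (hKn : IsIntegrallyClosed (reesAlgebra K))
    (P : Ideal (reesAlgebra K)) [hP : P.IsPrime] (e : A) (he : e ∈ K) (heP : rt K 1 e (rt_one he) ∉ P) :
    IsCohenMacaulayLocalRing (Localization.AtPrime P) := by
  have he0 : e ≠ 0 := by
    rintro rfl
    apply heP
    convert P.zero_mem using 1
    apply Subtype.ext; simp [rt]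
  have heF := ia_ne (F := F) he0
  have := chart_IC F he he0 hKn
  have := chart_noeth (F := F) K e
  have hnc := noChain_of_dim (chart_dim (F := F) hdim K e he he0)
  set θ' : reesAlgebra K →+* F[X] := (eval₂RingHom (C.comp (algebraMap A F)) (C (algebraMap A F e)⁻¹ * X)).comp
    (reesAlgebra K).val.toRingHom with hθ'
  have hmono : ∀ n y h, θ' (rt K n y h) = monomial n (algebraMap A F y * ((algebraMap A F e)⁻¹) ^ n) := by
    intro n y h
    change eval₂ _ _ (monomial n y) = _
    rw [eval₂_monomial, mul_pow, ← C_pow, ← mul_assoc]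
    change C _ * C _ * _ = _
    rw [← C_mul, C_mul_X_pow_eq_monomial]
  have hcoeff : ∀ r n, (θ' r).coeff n = algebraMap A F ((r : A[X]).coeff n) * ((algebraMap A F e)⁻¹) ^ n := by
    intro r n
    have hs : r = ∑ n ∈ (r : A[X]).support, rt K n _ (rees_coeff_mem r n) := by
      apply Subtype.ext
      rw [AddSubmonoidClass.coe_finsetSum]
      exact (r : A[X]).as_sum_support
    conv_lhs => rw [hs, map_sum]
    simp only [hmono, finsetSum_coeff, coeff_monomial]
    rw [Finset.sum_ite_eq']
    split_ifs with h
    · rfl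
    · rw [notMem_support_iff.1 h]; simp
  have hinj : Function.Injective θ' := by
    rw [injective_iff_map_eq_zero]
    intro r hr
    apply Subtype.ext
    ext n
    have := hcoeff r n
    rw [hr, coeff_zero] at this
    have h2 := (mul_eq_zero.1 this.symm).resolve_right (pow_ne_zero _ (inv_ne_zero heF))
    have h3 : (r : A[X]).coeff n = 0 := IsFractionRing.injective A F (by rw [h2, map_zero])
    rw [h3]; simp
  let ι : (chart F K e)[X] →+* F[X] := mapRingHom (chart F K e).subtype
  have hι : Function.Injective ι := map_injective _ Subtype.val_injective
  obtain ⟨θ, hθ⟩ := lift_hom ι hι θ' (by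
    intro r
    have : θ' r ∈ Polynomial.lifts (chart F K e).subtype := by
      rw [lifts_iff_coeff_lifts]
      intro n
      rw [hcoeff]
      refine ⟨⟨_, (mem_chart he he0 _).2 ⟨n, _, rees_coeff_mem r n, ?_⟩⟩, rfl⟩
      change algebraMap A F ((r : A[X]).coeff n) * ((algebraMap A F e)⁻¹) ^ n * algebraMap A F e ^ n = _
      rw [mul_assoc, ← mul_pow, inv_mul_cancel₀ heF, one_pow, mul_one]
    obtain ⟨s, hs⟩ := this
    exact ⟨s, hs⟩)
  refine chart_cm hnc θ ?_ P ?_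
  · intro x y hxy
    apply hinj
    rw [← hθ, ← hθ, hxy]
  · intro s
    induction s using Polynomial.induction_on' with
    | add s1 s2 h1 h2 =>
      obtain ⟨m1, hm1, r1, e1⟩ := h1
      obtain ⟨m2, hm2, r2, e2⟩ := h2
      refine ⟨m1 * m2, fun h => (hP.mem_or_mem h).elim hm1 hm2, r1 * m2 + r2 * m1, ?_⟩
      simp only [map_mul, map_add, ← e1, ← e2]; ring
    | monomial i s =>
      obtain ⟨N, y, hy, ey⟩ := (mem_chart he he0 _).1 s.2
      have hye : y * e ^ i ∈ K ^ (N + i) := by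
        rw [pow_add]; exact Ideal.mul_mem_mul hy (Ideal.pow_mem_pow he i)
      refine ⟨rt K 1 e (rt_one he) ^ N, fun h => heP (hP.mem_of_pow_mem _ h), rt K (N + i) (y * e ^ i) hye, ?_⟩
      apply hι
      rw [map_mul, hθ, hθ, map_pow, hmono, hmono, pow_one, mul_inv_cancel₀ heF, monomial_pow]
      change _ * map _ _ = _
      rw [map_monomial, monomial_mul_monomial, map_mul (algebraMap A F), ← ey]
      congr 1
      · ring
      · simp only [map_pow, pow_add, one_pow, one_mul, inv_pow]
        change (s : F) = _
        field_simp
end A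

theorem cm_rees {A : Type*} [CommRing A] [IsDomain A] [IsNoetherianRing A] [IsLocalRing A] [IsIntegrallyClosed A]
    (hdim : ringKrullDim A = 2) {K : Ideal A} (hK : Prim K) {c d : A} (hc : c ∈ K) (hd : d ∈ K) (hc0 : c ≠ 0)
    (hd0 : d ≠ 0) (hp : Prim (Ideal.span {c} ⊔ Ideal.span {d}))
    (hK2 : K ^ 2 ≤ Ideal.span {c} * K ⊔ Ideal.span {d} * K) (hKn : IsIntegrallyClosed (reesAlgebra K)) :
    IsCohenMacaulayRing (reesAlgebra K) := by
  refine ⟨inferInstance, fun P hP => ?_⟩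
  by_cases h1 : ∃ e ∈ K, algebraMap A (reesAlgebra K) e ∉ P
  · obtain ⟨e, he, heP⟩ := h1
    refine chart_cm (S := A) (noChain_of_dim hdim.le) (reesAlgebra K).val.toRingHom Subtype.val_injective P ?_
    intro s
    refine ⟨algebraMap A _ (e ^ s.natDegree), fun h => heP ?_, ⟨_, rees_clear he s _ le_rfl⟩, rfl⟩
    rw [map_pow] at h
    exact hP.mem_of_pow_mem _ h
  by_cases h2 : ∃ e, ∃ he : e ∈ K, rt K 1 e (rt_one he) ∉ P
  · obtain ⟨e, he, heP⟩ := h2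
    exact cm_case2 (FractionRing A) hdim.le K hKn P e he heP
  push Not at h1 h2
  have hcd := regA hdim hc0 hp
  have hsub : ∀ Q : Ideal (reesAlgebra K), Q.IsPrime → algebraMap A _ c ∈ Q → algebraMap A _ d ∈ Q →
      (∀ e (he : e ∈ K), rt K 1 e (rt_one he) ∈ Q) → reesM K ≤ Q := by
    intro Q hQ hcQ hdQ h r hr
    refine rees_mem_of Q h r ?_
    rw [mem_reesM] at hr
    have := hp.le_prime (hQ.comap (algebraMap A (reesAlgebra K))) (sup_le 
      ((Ideal.span_singleton_le_iff_mem _).2 hcQ) ((Ideal.span_singleton_le_iff_mem _).2 hdQ))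
    exact this hr
  have hmax : (reesM K).IsMaximal := by
    refine Ideal.comap_isMaximal_of_surjective _ ?_
    intro a
    exact ⟨algebraMap A _ a, coeff_C_zero⟩
  have hMP : reesM K = P := hmax.eq_of_le hP.ne_top (hsub P hP (h1 c hc) (h1 d hd) h2)
  refine cmLocal_atPrime P [algebraMap A _ c, rt K 1 d (rt_one hd), algebraMap A _ d + rt K 1 c (rt_one hc)] ?_ 
    (wr3 (alg_ne_zero hc0) (rees_reg hc0 hd hcd (colon_pow hc hc0 hcd hK2)) (rees_reg3 hc hd hc0 hd0 hcd hK2)) ?_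
  · intro r hr
    simp only [List.mem_cons, List.not_mem_nil, or_false] at hr
    rcases hr with rfl | rfl | rfl
    · exact h1 c hc
    · exact h2 d hd
    · exact P.add_mem (h1 d hd) (h2 c hc)
  · intro Q hQ hQP hmem
    have q1 := hmem (algebraMap A _ c) (by simp)
    have q2 := hmem (rt K 1 d (rt_one hd)) (by simp)
    have q3 := hmem (algebraMap A _ d + rt K 1 c (rt_one hc)) (by simp)
    have q4 : algebraMap A (reesAlgebra K) d ∈ Q := by
      apply hQ.mem_of_pow_mem 2
      have e1 : algebraMap A (reesAlgebra K) d ^ 2 = algebraMap A _ d * (algebraMap A _ d + rt K 1 c (rt_one hc)) -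
          algebraMap A _ c * rt K 1 d (rt_one hd) := by
        have : algebraMap A (reesAlgebra K) c * rt K 1 d (rt_one hd) = algebraMap A _ d * rt K 1 c (rt_one hc) := by
          apply Subtype.ext
          simp [rt, C_mul_monomial, mul_comm c d]
        rw [this]; ring
      rw [e1]
      exact Q.sub_mem (Q.mul_mem_left _ q3) (Q.mul_mem_right _ q1)
    have q5 : rt K 1 c (rt_one hc) ∈ Q := by
      have := Q.sub_mem q3 q4
      simpa using this
    rw [← hMP]
    exact hsub Q hQ q1 q4 (red_dt hc hd 1 (by simpa using hK2) Q hQ q5 q2)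

end Part12

section Part13

open Polynomial RingTheory.Sequence
set_option linter.unusedSectionVars false

theorem pick {k A : Type*} [Field k] [Infinite k] [CommRing A] [IsDomain A] [Algebra k A] (I : Ideal A) (hI : I ≠ ⊥)
    (V W U : Set (Ideal A)) (hV : V.Finite) (hW : W.Finite) (hU : U.Finite)
    (h : ∀ v ∈ V, ¬ I ≤ v) (h' : ∀ v ∈ W, ¬ I ≤ v) (h'' : ∀ v ∈ U, ¬ I ≤ v) :
    ∃ a ∈ I, a ≠ 0 ∧ (∀ v ∈ V, a ∉ v) ∧ (∀ v ∈ W, a ∉ v) ∧ (∀ v ∈ U, a ∉ v) := by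
  obtain ⟨a, ha, h1⟩ := select (k := k) I ({⊥} ∪ (V ∪ (W ∪ U)))
    ((Set.finite_singleton _).union (hV.union (hW.union hU))) (by
      rintro v (hv | hv | hv | hv)
      · rw [Set.mem_singleton_iff.1 hv, le_bot_iff]; exact hI
      · exact h v hv
      · exact h' v hv
      · exact h'' v hv)
  refine ⟨a, ha, ?_, fun v hv => h1 v (Or.inr (Or.inl hv)), fun v hv => h1 v (Or.inr (Or.inr (Or.inl hv))),
    fun v hv => h1 v (Or.inr (Or.inr (Or.inr hv)))⟩
  rintro rfl
  exact h1 ⊥ (Or.inl rfl) (Submodule.zero_mem _)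

theorem prod_red {A : Type*} [CommRing A] {I J : Ideal A} {a a' b b' : A} (ha : a ∈ I) (ha' : a' ∈ I) (hb : b ∈ J)
    (hb' : b' ∈ J) (hI2 : I ^ 2 ≤ Ideal.span {a} * I ⊔ Ideal.span {a'} * I)
    (hJ2 : J ^ 2 ≤ Ideal.span {b'} * J ⊔ Ideal.span {b} * J)
    (h1 : I * J ≤ Ideal.span {a} * J ⊔ Ideal.span {b'} * I)
    (h2 : I * J ≤ Ideal.span {a'} * J ⊔ Ideal.span {b} * I) :
    (I * J) ^ 2 ≤ Ideal.span {a * b} * (I * J) ⊔ Ideal.span {a' * b'} * (I * J) := by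
  have sa : Ideal.span {a} ≤ I := (Ideal.span_singleton_le_iff_mem _).2 ha
  have sa' : Ideal.span {a'} ≤ I := (Ideal.span_singleton_le_iff_mem _).2 ha'
  have sb : Ideal.span {b} ≤ J := (Ideal.span_singleton_le_iff_mem _).2 hb
  have sb' : Ideal.span {b'} ≤ J := (Ideal.span_singleton_le_iff_mem _).2 hb'
  simp only [← Ideal.span_singleton_mul_span_singleton]
  generalize Ideal.span {a} = α at *
  generalize Ideal.span {a'} = α' at *
  generalize Ideal.span {b} = β at *
  generalize Ideal.span {b'} = β' at *
  simp only [← Ideal.add_eq_sup] at *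
  calc (I * J) ^ 2 = (I * J) * (I * J) := sq _
    _ ≤ (α * J + β' * I) * (α' * J + β * I) := Ideal.mul_mono h1 h2
    _ = (α * α') * J ^ 2 + α * β * (I * J) + α' * β' * (I * J) + (β * β') * I ^ 2 := by ring
    _ ≤ (α * α') * (β' * J + β * J) + α * β * (I * J) + α' * β' * (I * J) + (β * β') * (α * I + α' * I) :=
      add_le_add (add_le_add (add_le_add (Ideal.mul_mono le_rfl hJ2) le_rfl) le_rfl) (Ideal.mul_mono le_rfl hI2)
    _ = α' * β' * (α * J) + α * β * (α' * J) + α * β * (I * J) + α' * β' * (I * J) +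
        (α * β * (I * β') + α' * β' * (I * β)) := by ring
    _ ≤ _ := by
      simp only [Ideal.add_eq_sup]
      refine sup_le (sup_le (sup_le (sup_le ?_ ?_) ?_) ?_) (sup_le ?_ ?_)
      · exact le_sup_of_le_right (Ideal.mul_mono le_rfl (Ideal.mul_mono sa le_rfl))
      · exact le_sup_of_le_left (Ideal.mul_mono le_rfl (Ideal.mul_mono sa' le_rfl))
      · exact le_sup_left
      · exact le_sup_right
      · exact le_sup_of_le_left (Ideal.mul_mono le_rfl (Ideal.mul_mono le_rfl sb'))
      · exact le_sup_of_le_right (Ideal.mul_mono le_rfl (Ideal.mul_mono le_rfl sb))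

end Part13

/-- If the Rees algebras of the `𝔪`-primary ideals `I` and `J` are
Cohen–Macaulay normal domains, then so is the Rees algebra of the product `IJ`. -/
theorem stmt5 (k : Type*) [Field k] [IsAlgClosed k]
    (A : Type*) [CommRing A] [IsDomain A] [IsNoetherianRing A] [IsLocalRing A]
    [Algebra k A] [IsIntegrallyClosed A]
    (hdim : ringKrullDim A = 2)
    (I : Ideal A) (hIprim : ∃ n : ℕ, IsLocalRing.maximalIdeal A ^ n ≤ I)
    (J : Ideal A) (hJprim : ∃ n : ℕ, IsLocalRing.maximalIdeal A ^ n ≤ J)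
    (hIrees : IsCMNormalDomain (reesAlgebra I))
    (hJrees : IsCMNormalDomain (reesAlgebra J)) :
    IsCMNormalDomain (reesAlgebra (I * J)) := by
  by_cases hIt : I = ⊤
  · rw [hIt, Ideal.top_mul]; exact hJrees
  by_cases hJt : J = ⊤
  · rw [hJt, Ideal.mul_top]; exact hIrees
  have hIm := IsLocalRing.le_maximalIdeal hIt
  have hJm := IsLocalRing.le_maximalIdeal hJt
  have hI : Prim I := hIprim
  have hJ : Prim J := hJprim
  have hI0 := hI.ne_bot hdim
  have hJ0 := hJ.ne_bot hdim
  obtain ⟨hIcm, -, hIn⟩ := hIrees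
  obtain ⟨hJcm, -, hJn⟩ := hJrees
  obtain ⟨x, hxI, hx0⟩ := Submodule.exists_mem_ne_zero_of_ne_bot hI0
  have hxm := hIm hxI
  have hinf : Infinite k := IsAlgClosed.instInfinite
  obtain ⟨V1, f1, g1, h1⟩ := L1 hdim.le x hxm hx0 I I
  obtain ⟨V2, f2, g2, h2⟩ := L1 hdim.le x hxm hx0 I J
  obtain ⟨V3, f3, g3, h3⟩ := L1 hdim.le x hxm hx0 J J
  obtain ⟨V4, f4, g4, h4⟩ := L0 I hI0 hIn
  obtain ⟨V5, f5, g5, h5⟩ := L0 J hJ0 hJn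
  obtain ⟨a, ha, ha0, a1, a2, a3⟩ := pick (k := k) I hI0 V1 V2 V4 f1 f2 f4 g1 g2 g4
  obtain ⟨V6, f6, g6, h6⟩ := h1 a ha a1
  obtain ⟨a', ha', ha'0, a1', a2', a3'⟩ := pick (k := k) I hI0 V6 V2 V4 f6 f2 f4 g6 g2 g4
  obtain ⟨V7, f7, g7, h7⟩ := h2 a ha a2
  obtain ⟨V8, f8, g8, h8⟩ := h2 a' ha' a2'
  obtain ⟨b', hb', hb'0, b1', b2', b3'⟩ := pick (k := k) J hJ0 V3 V7 V5 f3 f7 f5 g3 g7 g5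
  obtain ⟨V9, f9, g9, h9⟩ := h3 b' hb' b1'
  obtain ⟨b, hb, hb0, b1, b2, b3⟩ := pick (k := k) J hJ0 V9 V8 V5 f9 f8 f5 g9 g8 g5
  have jaa := h6 a' ha' a1'
  have jbb := h9 b hb b1
  have jab' := h7 b' hb' b2'
  have ja'b := h8 b hb b2
  have hI2 := cm_red2 hdim hI hIm hIcm ha ha' ha0 ha'0 jaa (h4 a' ha' a3') (h4 a ha a3)
  have hJ2 := cm_red2 hdim hJ hJm hJcm hb' hb hb'0 hb0 jbb (h5 b hb b3) (h5 b' hb' b3')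
  have pa := jaa.prim hI hI
  have pb := jbb.prim hJ hJ
  have m1 := mainL hdim ha ha' hb' hb ha0 ha'0 hb'0 hb0 hIn hJn jab' pa pb hI2 hJ2
  have m2 := mainL hdim ha' ha hb hb' ha'0 ha0 hb0 hb'0 hIn hJn ja'b (pa.mono (sup_comm _ _).le)
    (pb.mono (sup_comm _ _).le)
    (hI2.trans (sup_comm _ _).le) (hJ2.trans (sup_comm _ _).le)
  have hK : Prim (I * J) := hI.mul hJ
  have hKn : IsIntegrallyClosed (reesAlgebra (I * J)) := by
    refine rees_normal _ (hK.ne_bot hdim) fun n z hz => ?_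
    rw [mul_pow] at hz ⊢
    suffices hle : Ideal.span {a ^ n} * J ^ n ⊔ Ideal.span {b' ^ n} * I ^ n ≤ I ^ n * J ^ n from hle (m1 n z hz)
    refine sup_le ?_ ?_
    · exact Ideal.mul_mono ((Ideal.span_singleton_le_iff_mem _).2 (Ideal.pow_mem_pow ha n)) le_rfl
    · rw [mul_comm]
      exact Ideal.mul_mono le_rfl ((Ideal.span_singleton_le_iff_mem _).2 (Ideal.pow_mem_pow hb' n))
  have hK2 := prod_red ha ha' hb hb' hI2 hJ2
    (fun z hz => by simpa only [pow_one] using m1 1 z (self_int (by simpa only [pow_one] using hz)))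
    (fun z hz => by simpa only [pow_one] using m2 1 z (self_int (by simpa only [pow_one] using hz)))
  refine ⟨cm_rees hdim hK (Ideal.mul_mem_mul ha hb) (Ideal.mul_mem_mul ha' hb') (mul_ne_zero ha0 hb0)
    (mul_ne_zero ha'0 hb'0) ((hK.pow 2).mono (hK2.trans (sup_le_sup Ideal.mul_le_left Ideal.mul_le_left))) hK2 hKn,
    inferInstance, hKn⟩
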